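/- arXiv:2201.00847 — 4 statements merged into one kernel-verified Lean document; each statement's English description precedes it below -/
import Mathlib

section
/- Let M be a non-zero finite R-module. Then grade_R(M) = inf{i ≥ 0 : Ext_R^i(M,C) ≠ 0}. In particular, grade_R(M) ≤ G_C-dim_R(M). -/
open CategoryTheory TensorProduct

noncomputable section

universe u

variable (R : Type u) [CommRing R]

/-- The `i`-th Ext module `Ext_R^i(M, N)`. -/
def ExtM (M N : ModuleCat.{u} R) (i : ℕ) : ModuleCat.{u} R :=
  ((Ext R (ModuleCat.{u} R) i).obj (Opposite.op M)).obj N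

/-- The `i`-th Tor module `Tor_i^R(M, N)`. -/
def TorM (M N : ModuleCat.{u} R) (i : ℕ) : ModuleCat.{u} R :=
  ((Tor (ModuleCat.{u} R) i).obj M).obj N

/-- The biduality (evaluation) map `M → Hom_R(Hom_R(M, C), C)`. -/
def bidualityMap (C M : ModuleCat.{u} R) :
    ↥M →ₗ[R] ((↥M →ₗ[R] ↥C) →ₗ[R] ↥C) :=
  (LinearMap.id : (↥M →ₗ[R] ↥C) →ₗ[R] (↥M →ₗ[R] ↥C)).flip

/-- `C` is a semidualizing `R`-module. -/
def IsSemidualizing (C : ModuleCat.{u} R) : Prop :=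
  Module.Finite R ↥C ∧
  Function.Bijective (fun r : R => (r • LinearMap.id : ↥C →ₗ[R] ↥C)) ∧
  ∀ i : ℕ, 0 < i → Subsingleton (ExtM R C C i)

/-- `M` is totally `C`-reflexive. -/
def IsTotallyCReflexive (C M : ModuleCat.{u} R) : Prop :=
  Module.Finite R ↥M ∧
  Function.Bijective (bidualityMap R C M) ∧
  (∀ i : ℕ, 0 < i → Subsingleton (ExtM R M C i)) ∧
  (∀ i : ℕ, 0 < i → Subsingleton (ExtM R (ModuleCat.of R (↥M →ₗ[R] ↥C)) C i))

/-- `G_C`-dimension of `M` is at most `n`: there is an exact sequence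
`0 → X_n → ⋯ → X_0 → M → 0` with each `X_i` totally `C`-reflexive. -/
def gcdimLE (C : ModuleCat.{u} R) : ℕ → ModuleCat.{u} R → Prop
  | 0, M => IsTotallyCReflexive R C M
  | n+1, M => ∃ (X K : ModuleCat.{u} R) (f : ↥K →ₗ[R] ↥X) (g : ↥X →ₗ[R] ↥M),
      Function.Injective f ∧ Function.Surjective g ∧
      LinearMap.ker g = LinearMap.range f ∧
      IsTotallyCReflexive R C X ∧ gcdimLE C n K

/-- The `G_C`-dimension of `M`, as an element of `ℕ∞`. -/
def gcdim (C M : ModuleCat.{u} R) : ℕ∞ :=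
  sInf ((fun n : ℕ => (n : ℕ∞)) '' {n | gcdimLE R C n M})

/-- `grade_R(M) = inf { i | Ext_R^i(M, R) ≠ 0 }`, with `grade 0 = ∞`. -/
def gradeR (M : ModuleCat.{u} R) : ℕ∞ :=
  sInf ((fun i : ℕ => (i : ℕ∞)) ''
    {i | ¬ Subsingleton (ExtM R M (ModuleCat.of R R) i)})

/-- Reduced grade of `M` with respect to `C`. -/
def rgrade (C M : ModuleCat.{u} R) : ℕ∞ :=
  sInf ((fun i : ℕ => (i : ℕ∞)) ''
    {i | 0 < i ∧ ¬ Subsingleton (ExtM R M C i)})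

/-- `M` is reduced `G_C`-perfect. -/
def IsReducedGCPerfect (C M : ModuleCat.{u} R) : Prop :=
  gcdim R C M ≠ ⊤ ∧ rgrade R C M = gcdim R C M

/-- `M` is `G_C`-perfect. -/
def IsGCPerfect (C M : ModuleCat.{u} R) : Prop :=
  gcdim R C M ≠ ⊤ ∧ gradeR R M = gcdim R C M

/-- `π : P → M` is a projective cover: `P` projective, `π` surjective with superfluous kernel. -/
def IsProjectiveCover {P M : ModuleCat.{u} R} (π : ↥P →ₗ[R] ↥M) : Prop :=
  Module.Projective R ↥P ∧ Function.Surjective π ∧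
  ∀ N : Submodule R ↥P, N ⊔ LinearMap.ker π = ⊤ → N = ⊤

/-- `P₁ →d P₀ →π M → 0` is a minimal projective presentation of `M`. -/
def IsMinimalPresentation {P1 P0 M : ModuleCat.{u} R}
    (d : ↥P1 →ₗ[R] ↥P0) (π : ↥P0 →ₗ[R] ↥M) : Prop :=
  Module.Finite R ↥P1 ∧ Module.Finite R ↥P0 ∧
  IsProjectiveCover R π ∧
  LinearMap.range d = LinearMap.ker π ∧
  Module.Projective R ↥P1 ∧
  ∀ N : Submodule R ↥P1, N ⊔ LinearMap.ker d = ⊤ → N = ⊤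

/-- `T` is (a module isomorphic to) the transpose `Tr_C(M)` of `M` with respect to `C`,
computed from a minimal projective presentation of `M`. -/
def IsTransposeC (C M T : ModuleCat.{u} R) : Prop :=
  ∃ (P1 P0 : ModuleCat.{u} R) (d : ↥P1 →ₗ[R] ↥P0) (π : ↥P0 →ₗ[R] ↥M),
    IsMinimalPresentation R d π ∧
    Nonempty (↥T ≃ₗ[R]
      ((↥P1 →ₗ[R] ↥C) ⧸ LinearMap.range (LinearMap.lcomp R ↥C d)))

/-- `T` is the usual Auslander transpose `Tr(M) = Tr_R(M)`. -/
def IsTranspose (M T : ModuleCat.{u} R) : Prop :=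
  IsTransposeC R (ModuleCat.of R R) M T

/-- `S` is (a module isomorphic to) the first syzygy `Ω N`, i.e. the kernel of a
projective cover of `N`. -/
def IsSyzygyOf (N S : ModuleCat.{u} R) : Prop :=
  ∃ (P : ModuleCat.{u} R) (π : ↥P →ₗ[R] ↥N),
    Module.Finite R ↥P ∧ IsProjectiveCover R π ∧
    Nonempty (↥S ≃ₗ[R] LinearMap.ker π)

/-- `S` is (a module isomorphic to) the `n`-th syzygy `Ωⁿ M`. -/
def IsNthSyzygy : ℕ → ModuleCat.{u} R → ModuleCat.{u} R → Prop
  | 0, M, S => Nonempty (↥S ≃ₗ[R] ↥M)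
  | n+1, M, S => ∃ K : ModuleCat.{u} R, IsNthSyzygy n M K ∧ IsSyzygyOf R K S

/-- `L` is (a module isomorphic to) `λ M = Ω Tr M`. -/
def IsLambda (M L : ModuleCat.{u} R) : Prop :=
  ∃ T : ModuleCat.{u} R, IsTranspose R M T ∧ IsSyzygyOf R T L

/-- `M` is horizontally linked, i.e. `M ≅ λλM`. -/
def IsHorizontallyLinked (M : ModuleCat.{u} R) : Prop :=
  ∃ L L2 : ModuleCat.{u} R, IsLambda R M L ∧ IsLambda R L L2 ∧
    Nonempty (↥M ≃ₗ[R] ↥L2)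

/-- `M` is stable: it has no non-zero projective direct summand. -/
def IsStable (M : ModuleCat.{u} R) : Prop :=
  ∀ (P N : ModuleCat.{u} R), Module.Projective R ↥P →
    Nonempty (↥M ≃ₗ[R] (↥P × ↥N)) → Subsingleton ↥P

/-- `N` belongs to the Auslander class `A_C`. -/
def MemAuslanderClass (C N : ModuleCat.{u} R) : Prop :=
  Function.Bijective (TensorProduct.mk R ↥N ↥C) ∧
  (∀ i : ℕ, 0 < i → Subsingleton (TorM R C N i)) ∧
  (∀ i : ℕ, 0 < i → Subsingleton
    (ExtM R C (ModuleCat.of R (↥N ⊗[R] ↥C)) i))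

/-- `R` is semiperfect: every finite `R`-module has a projective cover. -/
def IsSemiperfectRing : Prop :=
  ∀ M : ModuleCat.{u} R, Module.Finite R ↥M →
    ∃ (P : ModuleCat.{u} R) (π : ↥P →ₗ[R] ↥M),
      Module.Finite R ↥P ∧ IsProjectiveCover R π

/-- Depth over a local ring, via Ext from the residue field. -/
def rdepth [IsLocalRing R] (M : ModuleCat.{u} R) : ℕ∞ :=
  sInf ((fun i : ℕ => (i : ℕ∞)) ''
    {i | ¬ Subsingleton
      (ExtM R (ModuleCat.of R (IsLocalRing.ResidueField R)) M i)})

/-- Projective dimension at most `n`. -/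
def pdimLE : ℕ → ModuleCat.{u} R → Prop
  | 0, M => Module.Projective R ↥M
  | n+1, M => ∃ (X K : ModuleCat.{u} R) (f : ↥K →ₗ[R] ↥X) (g : ↥X →ₗ[R] ↥M),
      Function.Injective f ∧ Function.Surjective g ∧
      LinearMap.ker g = LinearMap.range f ∧
      Module.Projective R ↥X ∧ pdimLE n K

/-- Projective dimension, as an element of `ℕ∞`. -/
def pdim (M : ModuleCat.{u} R) : ℕ∞ :=
  sInf ((fun n : ℕ => (n : ℕ∞)) '' {n | pdimLE R n M})

/-- `M` is `C`-`k`-torsionless. -/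
def IsCkTorsionless (C M : ModuleCat.{u} R) (k : ℕ) : Prop :=
  k = 0 ∨ ∀ T : ModuleCat.{u} R, IsTransposeC R C M T →
    ∀ i : ℕ, 1 ≤ i → i ≤ k → Subsingleton (ExtM R T C i)

/-- `M` is a `C`-syzygy: it embeds into `P ⊗_R C` with `P` finite projective. -/
def IsCSyzygy (C M : ModuleCat.{u} R) : Prop :=
  ∃ (P : ModuleCat.{u} R), Module.Finite R ↥P ∧ Module.Projective R ↥P ∧
    ∃ f : ↥M →ₗ[R] (↥P ⊗[R] ↥C), Function.Injective f


/-- There is an exact sequence `0 → N → X_k → ⋯ → X_1 → M → 0` of finite `R`-modules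
with `Ext_R^i(X_j, C) = 0` for all `i > 0` and all `j`. -/
def ExtVanishingChain (C : ModuleCat.{u} R) : ℕ → ModuleCat.{u} R → ModuleCat.{u} R → Prop
  | 0, N, M => Nonempty (↥N ≃ₗ[R] ↥M)
  | k+1, N, M => ∃ (X K : ModuleCat.{u} R) (f : ↥K →ₗ[R] ↥X) (g : ↥X →ₗ[R] ↥M),
      Function.Injective f ∧ Function.Surjective g ∧
      LinearMap.ker g = LinearMap.range f ∧
      Module.Finite R ↥X ∧ (∀ i : ℕ, 0 < i → Subsingleton (ExtM R X C i)) ∧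
      ExtVanishingChain C k N K


section helpers
open scoped Pointwise
variable {R}

lemma aux_exact₃ {M : ModuleCat.{u} R} {S : ShortComplex (ModuleCat.{u} R)} (hS : S.ShortExact)
    (i : ℕ) (h1 : Subsingleton (Abelian.Ext M S.X₂ i))
    (h2 : Subsingleton (Abelian.Ext M S.X₁ (i+1))) :
    Subsingleton (Abelian.Ext M S.X₃ i) := by
  refine subsingleton_of_forall_eq 0 fun x => ?_
  obtain ⟨y, rfl⟩ := Abelian.Ext.covariant_sequence_exact₃ M hS x rfl (Subsingleton.elim _ _)
  rw [Subsingleton.elim y 0]; simp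

lemma contra_exact₁ {N : ModuleCat.{u} R} {S : ShortComplex (ModuleCat.{u} R)} (hS : S.ShortExact)
    (i : ℕ) (h1 : Subsingleton (Abelian.Ext S.X₂ N i))
    (h2 : Subsingleton (Abelian.Ext S.X₃ N (i+1))) :
    Subsingleton (Abelian.Ext S.X₁ N i) := by
  refine subsingleton_of_forall_eq 0 fun x => ?_
  obtain ⟨y, rfl⟩ := Abelian.Ext.contravariant_sequence_exact₁ hS N x (add_comm 1 i)
    (Subsingleton.elim _ _)
  rw [Subsingleton.elim y 0]; simp

lemma contra_exact₃ {N : ModuleCat.{u} R} {S : ShortComplex (ModuleCat.{u} R)} (hS : S.ShortExact)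
    (i : ℕ) (h1 : Subsingleton (Abelian.Ext S.X₁ N i))
    (h2 : Subsingleton (Abelian.Ext S.X₂ N (i+1))) :
    Subsingleton (Abelian.Ext S.X₃ N (i+1)) := by
  refine subsingleton_of_forall_eq 0 fun x => ?_
  obtain ⟨y, rfl⟩ := Abelian.Ext.contravariant_sequence_exact₃ hS N x
    (Subsingleton.elim _ _) (add_comm 1 i)
  rw [Subsingleton.elim y 0]; simp

lemma ext_zero_iff (M N : ModuleCat.{u} R) :
    Subsingleton (Abelian.Ext M N 0) ↔ Subsingleton (↥M →ₗ[R] ↥N) :=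
  (Abelian.Ext.addEquiv₀.trans ModuleCat.homAddEquiv).toEquiv.subsingleton_congr

lemma extM_iff (M N : ModuleCat.{u} R) (i : ℕ) :
    Subsingleton (ExtM R M N i) ↔ Subsingleton (Abelian.Ext M N i) := by
  let P := projectiveResolution M
  have h0 : Subsingleton (ExtM R M N i) ↔ (P.complex.linearYonedaObj R N).ExactAt i := by
    rw [HomologicalComplex.exactAt_iff_isZero_homology, ← (P.isoExt i N).isZero_iff,
      ModuleCat.isZero_iff_subsingleton]
    rfl
  rw [h0]
  cases i with
  | zero =>
    rw [Abelian.Ext.homEquiv₀.subsingleton_congr,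
      HomologicalComplex.exactAt_iff' _ 0 0 1 (by simp) (by simp), ShortComplex.moduleCat_exact_iff]
    have hπ : P.complex.d 1 0 ≫ P.π.f 0 = 0 := P.complex_d_comp_π_f_zero
    constructor
    · intro h
      refine subsingleton_of_forall_eq 0 fun f => ?_
      have hz : P.complex.d 1 0 ≫ (P.π.f 0 ≫ f : P.complex.X 0 ⟶ N) = 0 :=
        (Category.assoc _ _ _).symm.trans ((congrArg (· ≫ f) hπ).trans Limits.zero_comp)
      obtain ⟨g, hg⟩ := h (P.π.f 0 ≫ f : P.complex.X 0 ⟶ N) hz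
      have hg1 : P.complex.d 0 0 ≫ (id g : P.complex.X 0 ⟶ N) = P.π.f 0 ≫ f := hg
      have hd : P.complex.d 0 0 = 0 := P.complex.shape _ _ (by simp)
      have hg' : P.π.f 0 ≫ f = 0 := by
        rw [← hg1, hd]
        exact Limits.zero_comp
      exact (cancel_epi (P.π.f 0)).1 (hg'.trans Limits.comp_zero.symm)
    · intro h f hf
      refine ⟨0, ?_⟩
      have hex := P.exact₀
      obtain ⟨f', hf'⟩ : ∃ f' : P.complex.X 0 ⟶ N, f' = f := ⟨f, rfl⟩
      have hf1 : P.complex.d 1 0 ≫ f' = 0 := by rw [hf']; exact hf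
      have h2 : P.π.f 0 ≫ hex.desc f' hf1 = f' := hex.g_desc f' hf1
      have h3 : hex.desc f' hf1 = 0 := Subsingleton.elim (α := M ⟶ N) _ _
      rw [map_zero, ← hf', ← h2, h3]
      exact Limits.comp_zero.symm
  | succ n =>
    rw [HomologicalComplex.exactAt_iff' _ n (n+1) (n+2) (by simp) (by simp),
      ShortComplex.moduleCat_exact_iff]
    constructor
    · intro h
      refine subsingleton_of_forall_eq 0 fun x => ?_
      obtain ⟨f, hf, rfl⟩ := P.extMk_surjective x (n+2) rfl
      rw [P.extMk_eq_zero_iff _ _ _ _ n rfl]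
      exact h f hf
    · intro h f hf
      have := (P.extMk_eq_zero_iff (Y := N) f (n+2) rfl hf n rfl).1 (Subsingleton.elim _ _)
      exact this

/-- short complex from linear maps -/
lemma exists_sc {K X M : ModuleCat.{u} R} (f : ↥K →ₗ[R] ↥X) (g : ↥X →ₗ[R] ↥M)
    (hf : Function.Injective f) (hg : Function.Surjective g)
    (he : LinearMap.ker g = LinearMap.range f) :
    ∃ (w : ModuleCat.ofHom f ≫ ModuleCat.ofHom g = 0),
      (ShortComplex.mk (ModuleCat.ofHom f) (ModuleCat.ofHom g) w).ShortExact := by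
  have hex : Function.Exact f g := LinearMap.exact_iff.2 he
  refine ⟨?_, ?_⟩
  · ext x
    exact hex.apply_apply_eq_zero x
  · exact { exact := ModuleCat.shortComplex_exact _ hex
            mono_f := (ModuleCat.mono_iff_injective _).2 hf
            epi_g := (ModuleCat.epi_iff_surjective _).2 hg }

lemma lift_of_ext {S : ShortComplex (ModuleCat.{u} R)} (hS : S.ShortExact) (C : ModuleCat.{u} R)
    (h : Subsingleton (Abelian.Ext C S.X₁ 1)) (φ : ↥C →ₗ[R] ↥S.X₃) :
    ∃ ψ : ↥C →ₗ[R] ↥S.X₂, S.g.hom ∘ₗ ψ = φ := by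
  obtain ⟨y, hy⟩ := Abelian.Ext.covariant_sequence_exact₃ C hS
    (Abelian.Ext.mk₀ (ModuleCat.ofHom φ)) (zero_add 1) (Subsingleton.elim _ _)
  obtain ⟨y, rfl⟩ := (Abelian.Ext.mk₀_bijective _ _).2 y
  rw [Abelian.Ext.mk₀_comp_mk₀] at hy
  have := (Abelian.Ext.mk₀_bijective _ _).1 hy
  exact ⟨y.hom, by simpa using congrArg ModuleCat.Hom.hom this⟩

lemma extend_of_ext {S : ShortComplex (ModuleCat.{u} R)} (hS : S.ShortExact) (C : ModuleCat.{u} R)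
    (h : Subsingleton (Abelian.Ext S.X₃ C 1)) (φ : ↥S.X₁ →ₗ[R] ↥C) :
    ∃ ψ : ↥S.X₂ →ₗ[R] ↥C, ψ ∘ₗ S.f.hom = φ := by
  obtain ⟨y, hy⟩ := Abelian.Ext.contravariant_sequence_exact₁ hS C
    (Abelian.Ext.mk₀ (ModuleCat.ofHom φ)) (add_zero 1) (Subsingleton.elim _ _)
  obtain ⟨y, rfl⟩ := (Abelian.Ext.mk₀_bijective _ _).2 y
  rw [Abelian.Ext.mk₀_comp_mk₀] at hy
  have := (Abelian.Ext.mk₀_bijective _ _).1 hy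
  exact ⟨y.hom, by simpa using congrArg ModuleCat.Hom.hom this⟩

lemma shift_ext (M B : ModuleCat.{u} R) (x : R) (hx : x ∈ Module.annihilator R M)
    (reg : IsSMulRegular B x) (n : ℕ) :
    (∀ i < n + 1, Subsingleton (Abelian.Ext M B i)) ↔
    (∀ i < n, Subsingleton (Abelian.Ext M (ModuleCat.of R (QuotSMulTop x B)) i)) := by
  constructor
  · intro h i hi
    exact aux_exact₃ reg.smulShortComplex_shortExact i (h i (by omega)) (h (i+1) (by omega))
  · intro h i hi
    cases i with
    | zero =>
      rw [ext_zero_iff]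
      exact IsSMulRegular.linearMap_subsingleton_of_mem_annihilator reg hx
    | succ i =>
      have h' : Subsingleton (Abelian.Ext M (ModuleCat.smulShortComplex B x).X₃ i) :=
        h i (by omega)
      refine subsingleton_of_forall_eq 0 fun y => ?_
      have z := Abelian.Ext.postcomp_smul_id_eq_zero_of_mem_annihilator (M := B) hx (i+1)
      obtain ⟨w, hw⟩ := Abelian.Ext.covariant_sequence_exact₁ M reg.smulShortComplex_shortExact y
        (by simpa using! congrArg (fun t => (ConcreteCategory.hom t) y) z) rfl
      rw [← hw, Subsingleton.elim w 0]
      exact Abelian.Ext.zero_comp M i (reg.smulShortComplex_shortExact).extClass (i+1) rfl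

lemma exists_quot_equiv (C A B : ModuleCat.{u} R) (e : ↥A ≃ₗ[R] (↥C →ₗ[R] ↥B)) (x : R)
    (reg : IsSMulRegular B x) (h : Subsingleton (Abelian.Ext C B 1)) :
    Nonempty (QuotSMulTop x A ≃ₗ[R] (↥C →ₗ[R] QuotSMulTop x B)) := by
  let q : ↥B →ₗ[R] QuotSMulTop x B := Submodule.mkQ _
  let F : ↥A →ₗ[R] (↥C →ₗ[R] QuotSMulTop x B) := (LinearMap.compRight R q) ∘ₗ e.toLinearMap
  have hF : Function.Surjective F := by
    intro φ
    obtain ⟨ψ, hψ⟩ : ∃ ψ : ↥C →ₗ[R] ↥B, q ∘ₗ ψ = φ :=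
      lift_of_ext reg.smulShortComplex_shortExact C h φ
    refine ⟨e.symm ψ, ?_⟩
    change q ∘ₗ e (e.symm ψ) = φ
    rw [e.apply_symm_apply]
    exact hψ
  have hk : x • (⊤ : Submodule R A) = LinearMap.ker F := by
    ext a
    rw [Submodule.mem_smul_pointwise_iff_exists, LinearMap.mem_ker]
    constructor
    · rintro ⟨b, -, rfl⟩
      ext c
      change Submodule.Quotient.mk (e (x • b) c) = 0
      rw [Submodule.Quotient.mk_eq_zero, Submodule.mem_smul_pointwise_iff_exists]
      exact ⟨e b c, trivial, by rw [map_smul]; rfl⟩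
    · intro ha
      have h1 : ∀ c, ∃ b : B, x • b = e a c := by
        intro c
        have := LinearMap.congr_fun ha c
        simpa [F, q, Submodule.mem_smul_pointwise_iff_exists] using this
      choose g hg using h1
      let ψ : ↥C →ₗ[R] ↥B :=
        { toFun := g
          map_add' := fun c d => reg (by simp [hg])
          map_smul' := fun r c => reg (by
            change x • g (r • c) = x • r • g c
            rw [smul_comm x r, hg, hg, map_smul]) }
      refine ⟨e.symm ψ, trivial, e.injective ?_⟩
      ext c
      simp [ψ, hg]
  exact ⟨(Submodule.quotEquivOfEq _ _ hk).trans (F.quotKerEquivOfSurjective hF)⟩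

lemma hom_iff [IsNoetherianRing R] (C M A B : ModuleCat.{u} R) [Module.Finite R C]
    [Module.Finite R M] [Module.Finite R B] (hann : Module.annihilator R C = ⊥)
    (e : ↥A ≃ₗ[R] (↥C →ₗ[R] ↥B)) :
    Subsingleton (↥M →ₗ[R] ↥A) ↔ Subsingleton (↥M →ₗ[R] ↥B) := by
  have e1 : (↥M →ₗ[R] ↥A) ≃ (↥C →ₗ[R] (↥M →ₗ[R] ↥B)) :=
    (e.congrRight.trans LinearMap.lflip).toEquiv
  rw [e1.subsingleton_congr]
  constructor
  · intro h
    obtain ⟨r, hr, h2⟩ := IsSMulRegular.subsingleton_linearMap_iff.1 h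
    rw [hann, Ideal.mem_bot] at hr
    subst hr
    exact IsSMulRegular.zero_iff_subsingleton.1 h2
  · intro h
    infer_instance

lemma main_iff [IsNoetherianRing R] (C M : ModuleCat.{u} R) [Module.Finite R C]
    [Module.Finite R M] (hann : Module.annihilator R C = ⊥) (n : ℕ) :
    ∀ (A B : ModuleCat.{u} R), Module.Finite R B → (↥A ≃ₗ[R] (↥C →ₗ[R] ↥B)) →
      (∀ i, 0 < i → Subsingleton (Abelian.Ext C B i)) →
      ((∀ i < n, Subsingleton (Abelian.Ext M A i)) ↔
       (∀ i < n, Subsingleton (Abelian.Ext M B i))) := by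
  induction n with
  | zero => simp
  | succ n ih =>
    intro A B hB e hC
    by_cases h0 : Subsingleton (↥M →ₗ[R] ↥B)
    · obtain ⟨x, hx, reg⟩ := IsSMulRegular.subsingleton_linearMap_iff.1 h0
      have regA : IsSMulRegular A x := by
        intro a b hab
        apply e.injective
        ext c
        apply reg
        have h := congrArg (fun t => e t c) hab
        change e (x • a) c = e (x • b) c at h
        rw [map_smul, map_smul] at h
        exact h
      rw [shift_ext M A x hx regA, shift_ext M B x hx reg]
      obtain ⟨e'⟩ := exists_quot_equiv C A B e x reg (hC 1 one_pos)
      refine ih (ModuleCat.of R (QuotSMulTop x A)) (ModuleCat.of R (QuotSMulTop x B))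
        (inferInstanceAs (Module.Finite R (QuotSMulTop x B))) e' ?_
      intro i hi
      exact aux_exact₃ reg.smulShortComplex_shortExact i (hC i hi) (hC (i+1) (by omega))
    · have h1 : ¬ Subsingleton (↥M →ₗ[R] ↥A) := by rwa [hom_iff C M A B hann e]
      constructor
      · intro h; exact absurd ((ext_zero_iff _ _).1 (h 0 (by omega))) h1
      · intro h; exact absurd ((ext_zero_iff _ _).1 (h 0 (by omega))) h0

lemma sInf_eq_of (S T : Set ℕ)
    (h : ∀ n, (∀ i < n, i ∉ S) ↔ (∀ i < n, i ∉ T)) :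
    sInf ((fun i : ℕ => (i : ℕ∞)) '' S) = sInf ((fun i : ℕ => (i : ℕ∞)) '' T) := by
  have key : ∀ S T : Set ℕ, (∀ n, (∀ i < n, i ∉ S) → (∀ i < n, i ∉ T)) →
      sInf ((fun i : ℕ => (i : ℕ∞)) '' S) ≤ sInf ((fun i : ℕ => (i : ℕ∞)) '' T) := by
    intro S T h
    refine le_sInf ?_
    rintro _ ⟨t, ht, rfl⟩
    by_cases h1 : ∀ i < t + 1, i ∉ S
    · exact absurd ht (h _ h1 t (by omega))
    · push Not at h1
      obtain ⟨i, hi, hiS⟩ := h1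
      refine (sInf_le (Set.mem_image_of_mem _ hiS)).trans ?_
      simpa using Nat.lt_succ_iff.1 hi
  exact le_antisymm (key S T fun n => (h n).1) (key T S fun n => (h n).2)

lemma gcdimLE_ext (C : ModuleCat.{u} R) (n : ℕ) : ∀ M : ModuleCat.{u} R, gcdimLE R C n M →
    ∀ i, n < i → Subsingleton (Abelian.Ext M C i) := by
  induction n with
  | zero =>
    intro M h i hi
    exact (extM_iff _ _ _).1 (h.2.2.1 i hi)
  | succ n ih =>
    rintro M ⟨X, K, f, g, hf, hg, he, hX, hK⟩ i hi
    obtain ⟨w, hS⟩ := exists_sc f g hf hg he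
    obtain ⟨j, rfl⟩ : ∃ j, i = j + 1 := ⟨i - 1, by omega⟩
    exact contra_exact₃ hS j (ih K hK j (by omega)) ((extM_iff _ _ _).1 (hX.2.2.1 _ (by omega)))

lemma gcdimLE_refl (C : ModuleCat.{u} R) (n : ℕ) : ∀ M : ModuleCat.{u} R, gcdimLE R C n M →
    (∀ i, 0 < i → Subsingleton (Abelian.Ext M C i)) →
    Function.Bijective (bidualityMap R C M) ∧
    ∀ i, 0 < i → Subsingleton (Abelian.Ext (ModuleCat.of R (↥M →ₗ[R] ↥C)) C i) := by
  induction n with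
  | zero =>
    intro M h _
    exact ⟨h.2.1, fun i hi => (extM_iff _ _ _).1 (h.2.2.2 i hi)⟩
  | succ n ih =>
    rintro M ⟨X, K, f, g, hf, hg, he, hX, hK⟩ hM
    obtain ⟨w, hS⟩ := exists_sc f g hf hg he
    have hXe : ∀ i, 0 < i → Subsingleton (Abelian.Ext X C i) :=
      fun i hi => (extM_iff _ _ _).1 (hX.2.2.1 i hi)
    have hXd : ∀ i, 0 < i → Subsingleton (Abelian.Ext (ModuleCat.of R (↥X →ₗ[R] ↥C)) C i) :=
      fun i hi => (extM_iff _ _ _).1 (hX.2.2.2 i hi)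
    have hKe : ∀ i, 0 < i → Subsingleton (Abelian.Ext K C i) :=
      fun i hi => contra_exact₁ hS i (hXe i hi) (hM (i+1) (by omega))
    obtain ⟨hKb, hKd⟩ := ih K hK hKe
    have hex : Function.Exact f g := LinearMap.exact_iff.2 he
    let f' : ↥(ModuleCat.of R (↥X →ₗ[R] ↥C)) →ₗ[R] ↥(ModuleCat.of R (↥K →ₗ[R] ↥C)) :=
      LinearMap.lcomp R ↥C f
    let g' : ↥(ModuleCat.of R (↥M →ₗ[R] ↥C)) →ₗ[R] ↥(ModuleCat.of R (↥X →ₗ[R] ↥C)) :=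
      LinearMap.lcomp R ↥C g
    have hg' : Function.Injective g' := LinearMap.lcomp_injective_of_surjective g hg
    have hf' : Function.Surjective f' := by
      intro φ
      obtain ⟨ψ, hψ⟩ := extend_of_ext hS C (hM 1 one_pos) φ
      exact ⟨ψ, hψ⟩
    have he' : LinearMap.ker f' = LinearMap.range g' := by
      have : Function.Exact g' f' := by
        intro φ
        constructor
        · intro h
          have hle : LinearMap.ker g ≤ LinearMap.ker φ := by
            rw [he]; rintro _ ⟨k, rfl⟩; exact LinearMap.congr_fun h k
          refine ⟨(LinearMap.ker g).liftQ φ hle ∘ₗ (g.quotKerEquivOfSurjective hg).symm.toLinearMap, ?_⟩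
          refine LinearMap.ext fun x => ?_
          have : (g.quotKerEquivOfSurjective hg).symm (g x) = Submodule.Quotient.mk x := by
            rw [LinearEquiv.symm_apply_eq]; rfl
          change (LinearMap.ker g).liftQ φ hle ((g.quotKerEquivOfSurjective hg).symm (g x)) = φ x
          rw [this]
          rfl
        · rintro ⟨ψ, rfl⟩
          refine LinearMap.ext fun k => ?_
          change ψ (g (f k)) = 0
          rw [hex.apply_apply_eq_zero, map_zero]
      exact this.linearMap_ker_eq
    obtain ⟨w', hS'⟩ := exists_sc g' f' hg' hf' he'
    refine ⟨⟨?_, ?_⟩, ?_⟩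
    · rw [injective_iff_map_eq_zero]
      intro m hm
      obtain ⟨x, rfl⟩ := hg m
      have hx : ∀ φ : ↥M →ₗ[R] ↥C, φ (g x) = 0 := fun φ => LinearMap.congr_fun hm φ
      have hle : LinearMap.ker f' ≤ LinearMap.ker (bidualityMap R C X x) := by
        rw [he']
        rintro _ ⟨φ, rfl⟩
        exact hx φ
      let θ : (↥K →ₗ[R] ↥C) →ₗ[R] ↥C :=
        ((LinearMap.ker f').liftQ _ hle) ∘ₗ (f'.quotKerEquivOfSurjective hf').symm.toLinearMap
      have hθ : ∀ ψ : ↥X →ₗ[R] ↥C, θ (ψ ∘ₗ f) = ψ x := by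
        intro ψ
        have : (f'.quotKerEquivOfSurjective hf').symm (f' ψ) = Submodule.Quotient.mk ψ := by
          rw [LinearEquiv.symm_apply_eq]; rfl
        change (LinearMap.ker f').liftQ _ hle
          ((f'.quotKerEquivOfSurjective hf').symm (f' ψ)) = ψ x
        rw [this]
        rfl
      obtain ⟨k, hk⟩ := hKb.2 θ
      have : f k = x := by
        apply hX.2.1.1
        ext ψ
        rw [← hk] at hθ
        exact hθ ψ
      rw [← this]
      exact hex.apply_apply_eq_zero k
    · intro θ
      obtain ⟨θ', hθ'⟩ := extend_of_ext hS' C (hKd 1 one_pos) θ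
      obtain ⟨x, rfl⟩ := hX.2.1.2 θ'
      exact ⟨g x, hθ'⟩
    · intro i hi
      exact contra_exact₁ hS' i (hXd i hi) (hKd (i+1) (by omega))

end helpers

/-- For a non-zero finite module `M`,
`grade_R(M) = inf { i ≥ 0 | Ext_R^i(M, C) ≠ 0 }`; in particular
`grade_R(M) ≤ G_C-dim_R(M)`. -/
theorem statement0 [IsNoetherianRing R] (hsp : IsSemiperfectRing R)
    (C : ModuleCat.{u} R) (hC : IsSemidualizing R C)
    (M : ModuleCat.{u} R) (hMfin : Module.Finite R ↥M) (hM0 : Nontrivial ↥M) :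
    gradeR R M =
      sInf ((fun i : ℕ => (i : ℕ∞)) '' {i | ¬ Subsingleton (ExtM R M C i)}) ∧
    gradeR R M ≤ gcdim R C M := by
  have hfin : Module.Finite R C := hC.1
  have hann : Module.annihilator R C = ⊥ := by
    rw [eq_bot_iff]
    intro r hr
    apply hC.2.1.1
    ext c
    change r • c = (0 : R) • c
    rw [zero_smul]
    exact Module.mem_annihilator.1 hr c
  have hCe : ∀ i, 0 < i → Subsingleton (Abelian.Ext C C i) :=
    fun i hi => (extM_iff _ _ _).1 (hC.2.2 i hi)
  let e : R ≃ₗ[R] (↥C →ₗ[R] ↥C) :=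
    LinearEquiv.ofBijective (LinearMap.lsmul R ↥C) hC.2.1
  have key : gradeR R M =
      sInf ((fun i : ℕ => (i : ℕ∞)) '' {i | ¬ Subsingleton (ExtM R M C i)}) := by
    apply sInf_eq_of
    intro n
    simpa only [Set.mem_ofPred_eq, not_not, extM_iff] using
      main_iff C M hann n (ModuleCat.of R R) C hfin e hCe
  refine ⟨key, ?_⟩
  rw [key]
  refine le_sInf ?_
  rintro _ ⟨n, hn, rfl⟩
  obtain ⟨i, hi⟩ : ∃ i, ¬ Subsingleton (ExtM R M C i) := by
    by_contra! hcon
    simp only [extM_iff] at hcon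
    have hb := (gcdimLE_refl C n M hn (fun i _ => hcon i)).1
    have h0 : Subsingleton (↥M →ₗ[R] ↥C) := (ext_zero_iff _ _).1 (hcon 0)
    have : Subsingleton ↥M := hb.1.subsingleton
    exact not_subsingleton ↥M this
  have hin : i ≤ n := by
    by_contra! h
    exact hi ((extM_iff _ _ _).2 (gcdimLE_ext C n M hn i h))
  exact (sInf_le (Set.mem_image_of_mem _ (show i ∈ {i | ¬ Subsingleton (ExtM R M C i)} from hi))).trans
    (by simpa using hin)

end
end

section
/- Let M be a finite R-module. (i) If M is an R-syzygy (i.e. M embeds into a finite projective R-module), then M is a C-syzygy. (ii) M is a C-syzygy if and only if Ext_R^1(Tr_C(M), C) = 0. -/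
open CategoryTheory TensorProduct

noncomputable section

universe u

variable (R : Type u) [CommRing R]

/-- Every linear map from the kernel of a surjection onto `T` to `C` extends. -/
def EVan (C T : Type u) [AddCommGroup C] [Module R C] [AddCommGroup T] [Module R T] : Prop :=
  ∀ (B : Type u) [AddCommGroup B] [Module R B] (p : B →ₗ[R] T), Function.Surjective p →
    ∀ g : LinearMap.ker p →ₗ[R] C, ∃ h : B →ₗ[R] C, ∀ x : LinearMap.ker p, h x = g x


lemma exists_desc {X Y Z : Type*} [AddCommGroup X] [Module R X] [AddCommGroup Y] [Module R Y]
    [AddCommGroup Z] [Module R Z] (s : X →ₗ[R] Y) (hs : Function.Surjective s)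
    (f : X →ₗ[R] Z) (h : ∀ x, s x = 0 → f x = 0) : ∃ f' : Y →ₗ[R] Z, ∀ x, f' (s x) = f x := by
  refine ⟨(Submodule.liftQ (LinearMap.ker s) f (fun x hx => h x hx)) ∘ₗ
    (s.quotKerEquivOfSurjective hs).symm.toLinearMap, fun x => ?_⟩
  have : (s.quotKerEquivOfSurjective hs).symm (s x) = Submodule.Quotient.mk x := by
    rw [LinearEquiv.symm_apply_eq]; rfl
  change Submodule.liftQ _ f (fun x hx => h x hx) ((s.quotKerEquivOfSurjective hs).symm (s x)) = f x
  rw [this]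
  exact Submodule.liftQ_apply _ _ _

lemma ext_iff_chain (T C : ModuleCat.{u} R) (Q : ProjectiveResolution T) :
    Subsingleton (ExtM R T C 1) ↔
      ∀ h : Q.complex.X 1 →ₗ[R] C, h ∘ₗ (Q.complex.d 2 1).hom = 0 →
        ∃ k : Q.complex.X 0 →ₗ[R] C, k ∘ₗ (Q.complex.d 1 0).hom = h := by
  have e := Q.isoExt (R := R) 1 C
  have h1 : Subsingleton (ExtM R T C 1) ↔
      Limits.IsZero ((Q.complex.linearYonedaObj R C).homology 1) := by
    rw [← Iso.isZero_iff e, ModuleCat.isZero_iff_subsingleton]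
    rfl
  rw [h1, ← HomologicalComplex.exactAt_iff_isZero_homology,
    HomologicalComplex.exactAt_iff' _ 0 1 2 (by simp) (by simp),
    ShortComplex.moduleCat_exact_iff]
  constructor
  · intro H h hh
    obtain ⟨k, hk⟩ := H (ModuleCat.ofHom h : Q.complex.X 1 ⟶ C) (by
      change (Q.complex.d 2 1 ≫ ModuleCat.ofHom h) = 0
      ext x
      exact LinearMap.congr_fun hh x)
    refine ⟨ModuleCat.Hom.hom (show Q.complex.X 0 ⟶ C from k), ?_⟩
    have hk' : (Q.complex.d 1 0 ≫ (show Q.complex.X 0 ⟶ C from k)) = ModuleCat.ofHom h := hk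
    exact congrArg ModuleCat.Hom.hom hk'
  · intro H h hh
    have hh' : (Q.complex.d 2 1 ≫ (show Q.complex.X 1 ⟶ C from h)) = 0 := hh
    obtain ⟨k, hk⟩ := H (ModuleCat.Hom.hom (show Q.complex.X 1 ⟶ C from h))
      (congrArg ModuleCat.Hom.hom hh')
    refine ⟨(ModuleCat.ofHom k : Q.complex.X 0 ⟶ C), ?_⟩
    change (Q.complex.d 1 0 ≫ ModuleCat.ofHom k) = h
    exact ModuleCat.hom_ext hk

lemma EVan_iff_chain (C T Q0 Q1 Q2 : Type u) [AddCommGroup C] [Module R C]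
    [AddCommGroup T] [Module R T] [AddCommGroup Q0] [Module R Q0] [AddCommGroup Q1] [Module R Q1]
    [AddCommGroup Q2] [Module R Q2] [Module.Projective R Q0]
    (p : Q0 →ₗ[R] T) (d1 : Q1 →ₗ[R] Q0) (d2 : Q2 →ₗ[R] Q1) (hp : Function.Surjective p)
    (h1 : LinearMap.range d1 = LinearMap.ker p) (h2 : LinearMap.range d2 = LinearMap.ker d1) :
    EVan R C T ↔ ∀ h : Q1 →ₗ[R] C, h ∘ₗ d2 = 0 → ∃ k : Q0 →ₗ[R] C, k ∘ₗ d1 = h := by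
  have hm : ∀ x, d1 x ∈ LinearMap.ker p := fun x => h1 ▸ LinearMap.mem_range_self d1 x
  have hs : Function.Surjective (d1.codRestrict (LinearMap.ker p) hm) := by
    rintro ⟨y, hy⟩
    rw [← h1] at hy
    obtain ⟨x, rfl⟩ := hy
    exact ⟨x, rfl⟩
  constructor
  · intro H h hh
    obtain ⟨g, hg⟩ := exists_desc R (d1.codRestrict (LinearMap.ker p) hm) hs h (by
      intro x hx
      have : x ∈ LinearMap.ker d1 := congrArg Subtype.val hx
      rw [← h2] at this
      obtain ⟨y, rfl⟩ := this
      exact LinearMap.congr_fun hh y)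
    obtain ⟨k, hk⟩ := H Q0 p hp g
    refine ⟨k, LinearMap.ext fun x => ?_⟩
    rw [← hg x, ← hk]
    rfl
  · intro H B _ _ q hq g
    obtain ⟨l, hl⟩ := Module.projective_lifting_property q p hq
    have hl' : ∀ x, q (l x) = p x := fun x => LinearMap.congr_fun hl x
    have hlm : ∀ x, (l ∘ₗ d1) x ∈ LinearMap.ker q := fun x => by
      have := hm x
      simpa [hl'] using this
    obtain ⟨k, hk⟩ := H (g ∘ₗ (l ∘ₗ d1).codRestrict (LinearMap.ker q) hlm) (by
      ext x
      have hx : d1 (d2 x) = 0 := by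
        have : d2 x ∈ LinearMap.ker d1 := h2 ▸ LinearMap.mem_range_self d2 x
        exact this
      have : (l ∘ₗ d1).codRestrict (LinearMap.ker q) hlm (d2 x) = 0 := by
        apply Subtype.ext
        simp [hx]
      simp [this])
    obtain ⟨f, hf⟩ := exists_desc R (l.coprod (LinearMap.ker q).subtype) (by
      intro b
      obtain ⟨x, hx⟩ := hp (q b)
      refine ⟨(x, ⟨b - l x, by simp [hl', hx]⟩), by simp⟩) (k.coprod g) (by
      rintro ⟨x, y⟩ hxy
      have hxy' : l x + (y : B) = 0 := by simpa using hxy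
      have hpx : x ∈ LinearMap.ker p := by
        have := congrArg q hxy'
        have hy : q (y : B) = 0 := y.2
        simpa [hl', hy] using this
      rw [← h1] at hpx
      obtain ⟨z, rfl⟩ := hpx
      have e1 : k (d1 z) = g ((l ∘ₗ d1).codRestrict (LinearMap.ker q) hlm z) :=
        LinearMap.congr_fun hk z
      have e2 : (l ∘ₗ d1).codRestrict (LinearMap.ker q) hlm z + y = 0 := Subtype.ext hxy'
      rw [LinearMap.coprod_apply, e1, ← map_add, e2, map_zero])
    refine ⟨f, fun x => ?_⟩
    have := hf (0, x)
    simpa using this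

lemma ext_iff_EVan (T C : ModuleCat.{u} R) :
    Subsingleton (ExtM R T C 1) ↔ EVan R C T := by
  obtain ⟨Q⟩ := (inferInstance : HasProjectiveResolution T).out
  have : Module.Projective R (Q.complex.X 0) :=
    (IsProjective.iff_projective (R := R) _).2 (Q.projective 0)
  rw [ext_iff_chain R T C Q]
  refine (EVan_iff_chain R C T _ _ _
    (ModuleCat.Hom.hom (show Q.complex.X 0 ⟶ T from Q.π.f 0)) _ _ ?_ ?_ ?_).symm
  · exact (ModuleCat.epi_iff_surjective _).1 (inferInstance : Epi (Q.π.f 0))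
  · exact Q.exact₀.moduleCat_range_eq_ker
  · exact (Q.exact_succ 0).moduleCat_range_eq_ker

section EV

variable {C : Type u} [AddCommGroup C] [Module R C]
variable {X : Type u} [AddCommGroup X] [Module R X] {Y : Type u} [AddCommGroup Y] [Module R Y]

lemma EVan.retract (h : EVan R C Y) (i : X →ₗ[R] Y) (r : Y →ₗ[R] X) (hri : ∀ x, r (i x) = x) :
    EVan R C X := by
  intro B _ _ p hp g
  let D : B × Y →ₗ[R] X := p ∘ₗ LinearMap.fst R B Y - r ∘ₗ LinearMap.snd R B Y
  let q : LinearMap.ker D →ₗ[R] Y := LinearMap.snd R B Y ∘ₗ (LinearMap.ker D).subtype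
  have hD : ∀ z : LinearMap.ker D, p z.1.1 = r z.1.2 := fun z => sub_eq_zero.1 z.2
  have hq : Function.Surjective q := by
    intro y
    obtain ⟨b, hb⟩ := hp (r y)
    exact ⟨⟨(b, y), by simp [D, hb]⟩, rfl⟩
  let t : LinearMap.ker q →ₗ[R] LinearMap.ker p :=
    LinearMap.codRestrict _ (LinearMap.fst R B Y ∘ₗ (LinearMap.ker D).subtype ∘ₗ
      (LinearMap.ker q).subtype) (by
      intro z
      have h1 := hD z.1
      have h2 : z.1.1.2 = 0 := z.2
      change p z.1.1.1 = 0
      rw [h1, h2, map_zero])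
  obtain ⟨f, hf⟩ := h _ q hq (g ∘ₗ t)
  let s : B →ₗ[R] LinearMap.ker D :=
    LinearMap.codRestrict _ (LinearMap.prod LinearMap.id (i ∘ₗ p)) (by
      intro b
      simp [D, hri])
  refine ⟨f ∘ₗ s, fun x => ?_⟩
  have hx : p x = 0 := x.2
  have := hf ⟨s x, by simp [q, s, hx]⟩
  exact this

lemma EVan.prod (hX : EVan R C X) (hY : EVan R C Y) : EVan R C (X × Y) := by
  intro B _ _ p hp g
  let q : B →ₗ[R] Y := LinearMap.snd R X Y ∘ₗ p
  have hq : Function.Surjective q := fun y => by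
    obtain ⟨b, hb⟩ := hp (0, y)
    exact ⟨b, by simp [q, hb]⟩
  let p' : LinearMap.ker q →ₗ[R] X := LinearMap.fst R X Y ∘ₗ p ∘ₗ (LinearMap.ker q).subtype
  have hp' : Function.Surjective p' := fun x => by
    obtain ⟨b, hb⟩ := hp (x, 0)
    exact ⟨⟨b, by simp [q, hb]⟩, by simp [p', hb]⟩
  let t : LinearMap.ker p' →ₗ[R] LinearMap.ker p :=
    LinearMap.codRestrict _ ((LinearMap.ker q).subtype ∘ₗ (LinearMap.ker p').subtype) (by
      intro z
      have h1 : (p z.1.1).1 = 0 := z.2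
      have h2 : (p z.1.1).2 = 0 := z.1.2
      exact Prod.ext h1 h2)
  obtain ⟨f, hf⟩ := hX _ p' hp' (g ∘ₗ t)
  obtain ⟨k, hk⟩ := hY _ q hq f
  refine ⟨k, fun x => ?_⟩
  have hx : p x = 0 := x.2
  rw [show k x = f ⟨x, by simp [q, hx]⟩ from hk ⟨x, by simp [q, hx]⟩]
  exact hf ⟨⟨x, by simp [q, hx]⟩, by simp [p', hx]⟩

lemma EVan.pi (h : EVan R C X) (n : ℕ) : EVan R C (Fin n → X) := by
  induction n with
  | zero =>
    intro B _ _ p _ g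
    have : ∀ b, b ∈ LinearMap.ker p := fun b => Subsingleton.elim _ _
    exact ⟨g ∘ₗ LinearMap.codRestrict _ LinearMap.id this, fun x => rfl⟩
  | succ n ih =>
    exact (h.prod R ih).retract R (Fin.consLinearEquiv R (fun _ => X)).symm.toLinearMap
      (Fin.consLinearEquiv R (fun _ => X)).toLinearMap
      (fun x => LinearEquiv.apply_symm_apply _ _)

/-- The middle term of a short exact sequence. -/
lemma EVan.of_ext (hX : EVan R C X) (b : X →ₗ[R] Y) (hb : Function.Surjective b)
    (H : ∀ g : LinearMap.ker b →ₗ[R] C, ∃ h : X →ₗ[R] C, ∀ x : LinearMap.ker b, h x = g x) :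
    EVan R C Y := by
  intro B _ _ p hp g
  -- pull back
  let D : B × X →ₗ[R] Y := p ∘ₗ LinearMap.fst R B X - b ∘ₗ LinearMap.snd R B X
  have hD : ∀ z : LinearMap.ker D, p z.1.1 = b z.1.2 := fun z => sub_eq_zero.1 z.2
  let q : LinearMap.ker D →ₗ[R] X := LinearMap.snd R B X ∘ₗ (LinearMap.ker D).subtype
  have hq : Function.Surjective q := by
    intro y
    obtain ⟨c, hc⟩ := hp (b y)
    exact ⟨⟨(c, y), by simp [D, hc]⟩, rfl⟩
  let t : LinearMap.ker q →ₗ[R] LinearMap.ker p :=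
    LinearMap.codRestrict _ (LinearMap.fst R B X ∘ₗ (LinearMap.ker D).subtype ∘ₗ
      (LinearMap.ker q).subtype) (by
      intro z
      have h1 := hD z.1
      have h2 : z.1.1.2 = 0 := z.2
      change p z.1.1.1 = 0
      rw [h1, h2, map_zero])
  obtain ⟨f, hf⟩ := hX _ q hq (g ∘ₗ t)
  -- restrict `f` to `0 × ker b`
  let j : LinearMap.ker b →ₗ[R] LinearMap.ker D :=
    LinearMap.codRestrict _ (LinearMap.inr R B X ∘ₗ (LinearMap.ker b).subtype) (by
      intro z
      have : b z = 0 := z.2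
      simp [D, this])
  obtain ⟨k, hk⟩ := H (f ∘ₗ j)
  obtain ⟨m, hm⟩ := exists_desc R (LinearMap.fst R B X ∘ₗ (LinearMap.ker D).subtype) (by
    intro c
    obtain ⟨x, hx⟩ := hb (p c)
    exact ⟨⟨(c, x), by simp [D, hx]⟩, rfl⟩) (f - k ∘ₗ q) (by
    intro z hz
    have hz1 : z.1.1 = 0 := hz
    have hz2 : b z.1.2 = 0 := by rw [← hD, hz1, map_zero]
    have e1 : j ⟨z.1.2, hz2⟩ = z := Subtype.ext (Prod.ext hz1.symm rfl)
    have e2 : k z.1.2 = f (j ⟨z.1.2, hz2⟩) := hk ⟨z.1.2, hz2⟩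
    rw [e1] at e2
    change f z - k z.1.2 = 0
    rw [e2, sub_self])
  refine ⟨m, fun x => ?_⟩
  have hx : p x = 0 := x.2
  have e1 := hm ⟨((x : B), 0), by simp [D, hx]⟩
  have e2 := hf ⟨⟨((x : B), 0), by simp [D, hx]⟩, by simp [q]⟩
  have e3 : m x = f ⟨((x : B), 0), by simp [D, hx]⟩ := by
    simpa [q] using e1
  rw [e3]
  exact e2

end EV

/-- Homomorphisms `M → C` separate points of `M`. -/
def SepC (C M : Type u) [AddCommGroup C] [Module R C] [AddCommGroup M] [Module R M] : Prop :=
  ∀ m : M, (∀ φ : M →ₗ[R] C, φ m = 0) → m = 0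

section Sep

variable {C : Type u} [AddCommGroup C] [Module R C]
variable {M : Type u} [AddCommGroup M] [Module R M] {N : Type u} [AddCommGroup N] [Module R N]

lemma SepC.of_inj (h : SepC R C N) (f : M →ₗ[R] N) (hf : Function.Injective f) : SepC R C M := by
  intro m hm
  apply hf
  rw [map_zero]
  exact h _ fun φ => hm (φ ∘ₗ f)

lemma SepC.pi (h : SepC R C N) (n : ℕ) : SepC R C (Fin n → N) := by
  intro m hm
  ext i
  exact h _ fun φ => hm (φ ∘ₗ LinearMap.proj i)

lemma SepC.projective (h : SepC R C R) [Module.Finite R M] [Module.Projective R M] :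
    SepC R C M := by
  obtain ⟨n, f, g, -, hg, -⟩ := Module.Finite.exists_comp_eq_id_of_projective R M
  exact (h.pi R n).of_inj R g hg

lemma SepC.tensor [Module.Finite R M] [Module.Projective R M] : SepC R C (M ⊗[R] C) := by
  obtain ⟨n, f, g, -, -, hfg⟩ := Module.Finite.exists_comp_eq_id_of_projective R M
  have hC : SepC R C C := fun m hm => hm LinearMap.id
  have h1 : SepC R C ((Fin n → R) ⊗[R] C) :=
    (hC.pi R n).of_inj R ((TensorProduct.comm R _ _).trans
      (TensorProduct.piScalarRight R R C (Fin n))).toLinearMap (LinearEquiv.injective _)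
  refine h1.of_inj R (g.rTensor C) ?_
  have : f.rTensor C ∘ₗ g.rTensor C = LinearMap.id := by
    rw [← LinearMap.rTensor_comp, hfg, LinearMap.rTensor_id]
  exact LinearMap.injective_of_comp_eq_id _ _ this

lemma SepC.embed [IsNoetherianRing R] [Module.Finite R C] [Module.Finite R M] (h : SepC R C M) :
    ∃ (n : ℕ) (f : M →ₗ[R] (Fin n → R) ⊗[R] C), Function.Injective f := by
  obtain ⟨n, s, hs⟩ := Module.Finite.exists_fin (R := R) (M := M →ₗ[R] C)
  let e : ((Fin n → R) ⊗[R] C) ≃ₗ[R] (Fin n → C) := (TensorProduct.comm R _ _).trans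
      (TensorProduct.piScalarRight R R C (Fin n))
  refine ⟨n, e.symm.toLinearMap ∘ₗ LinearMap.pi s, e.symm.injective.comp ?_⟩
  rw [← LinearMap.ker_eq_bot, eq_bot_iff]
  intro m hm
  refine h m fun φ => ?_
  have hφ : φ ∈ Submodule.span R (Set.range s) := hs ▸ Submodule.mem_top
  have hle : Submodule.span R (Set.range s) ≤ 
      LinearMap.ker (LinearMap.applyₗ (R := R) (M₂ := C) m) := by
    rw [Submodule.span_le]
    rintro _ ⟨i, rfl⟩
    exact congrFun hm i
  exact hle hφ

/-- The dual basis expansion of a homomorphism `M → C`. -/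
lemma dual_expand (n : ℕ) (s : (Fin n → R) →ₗ[R] M) (g : M →ₗ[R] (Fin n → R))
    (hsg : s ∘ₗ g = LinearMap.id) (φ : M →ₗ[R] C) :
    ∑ j, LinearMap.smulRightₗ (LinearMap.proj j ∘ₗ g) (φ (s (Pi.single j 1))) = φ := by
  ext m
  have h1 : s (g m) = m := LinearMap.congr_fun hsg m
  conv_rhs => rw [← h1, pi_eq_sum_univ' (g m)]
  simp only [LinearMap.sum_apply, map_sum, map_smul, LinearMap.smulRightₗ_apply,
    LinearMap.comp_apply, LinearMap.proj_apply]
  refine Finset.sum_congr rfl fun j _ => ?_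
  congr 3

lemma bidual_surj (hC : ∀ f : C →ₗ[R] C, ∃ r : R, ∀ c, f c = r • c)
    [Module.Finite R M] [Module.Projective R M] (ψ : (M →ₗ[R] C) →ₗ[R] C) :
    ∃ m : M, ∀ φ, ψ φ = φ m := by
  obtain ⟨n, s, g, -, -, hsg⟩ := Module.Finite.exists_comp_eq_id_of_projective R M
  choose r hr using fun j : Fin n => hC (ψ ∘ₗ LinearMap.smulRightₗ (LinearMap.proj j ∘ₗ g))
  refine ⟨∑ j, r j • s (Pi.single j 1), fun φ => ?_⟩
  conv_lhs => rw [← dual_expand R n s g hsg φ]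
  rw [map_sum, map_sum]
  refine Finset.sum_congr rfl fun j _ => ?_
  rw [map_smul]
  exact hr j _

lemma EVan.dual (hC : EVan R C C) [Module.Finite R M] [Module.Projective R M] :
    EVan R C (M →ₗ[R] C) := by
  obtain ⟨n, s, g, -, -, hsg⟩ := Module.Finite.exists_comp_eq_id_of_projective R M
  refine (hC.pi R n).retract R
    (LinearMap.pi fun j => LinearMap.applyₗ (s (Pi.single j 1)))
    (∑ j, LinearMap.smulRightₗ (LinearMap.proj j ∘ₗ g) ∘ₗ LinearMap.proj j) (fun φ => ?_)
  conv_rhs => rw [← dual_expand R n s g hsg φ]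
  simp

end Sep

section Main

variable {C M P0 P1 : Type u} [AddCommGroup C] [Module R C] [AddCommGroup M] [Module R M]
  [AddCommGroup P0] [Module R P0] [AddCommGroup P1] [Module R P1]
  [Module.Finite R P0] [Module.Projective R P0] [Module.Finite R P1] [Module.Projective R P1]

lemma sep_iff_EVan (hE : EVan R C C) (hR : SepC R C R)
    (hC : ∀ f : C →ₗ[R] C, ∃ r : R, ∀ c, f c = r • c)
    (d : P1 →ₗ[R] P0) (π : P0 →ₗ[R] M) (hπ : Function.Surjective π)
    (hd : LinearMap.range d = LinearMap.ker π) :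
    SepC R C M ↔ EVan R C ((P1 →ₗ[R] C) ⧸ LinearMap.range (LinearMap.lcomp R C d)) := by
  have hmem : ∀ φ : P0 →ₗ[R] C, LinearMap.lcomp R C d φ ∈
      LinearMap.ker (LinearMap.range (LinearMap.lcomp R C d)).mkQ := fun φ => by
    rw [Submodule.ker_mkQ]
    exact LinearMap.mem_range_self _ φ
  let e : (P0 →ₗ[R] C) →ₗ[R] LinearMap.ker (LinearMap.range (LinearMap.lcomp R C d)).mkQ :=
    LinearMap.codRestrict _ (LinearMap.lcomp R C d) hmem
  have he : Function.Surjective e := by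
    rintro ⟨y, hy⟩
    have hy' := hy
    rw [Submodule.ker_mkQ] at hy'
    obtain ⟨φ, rfl⟩ := hy'
    exact ⟨φ, rfl⟩
  have hπd : ∀ x, π (d x) = 0 := fun x => by
    have : d x ∈ LinearMap.ker π := hd ▸ LinearMap.mem_range_self d x
    exact this
  constructor
  · intro hS
    refine (EVan.dual R hE (M := P1)).of_ext R _ (Submodule.mkQ_surjective _) fun g => ?_
    obtain ⟨p, hp⟩ := bidual_surj R hC (g ∘ₗ e)
    have hp0 : π p = 0 := hS _ fun φ => by
      have h1 := hp (φ ∘ₗ π)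
      have h2 : e (φ ∘ₗ π) = 0 := by
        apply Subtype.ext
        ext x
        change φ (π (d x)) = 0
        rw [hπd, map_zero]
      rw [LinearMap.comp_apply, h2, map_zero] at h1
      exact h1.symm
    have : p ∈ LinearMap.range d := hd ▸ hp0
    obtain ⟨x, rfl⟩ := this
    refine ⟨LinearMap.applyₗ x, fun y => ?_⟩
    obtain ⟨φ, rfl⟩ := he y
    exact (hp φ).symm
  · intro hV m hm
    obtain ⟨p, rfl⟩ := hπ m
    obtain ⟨g, hg⟩ := exists_desc R e he (LinearMap.applyₗ p) (by
      intro φ hφ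
      have hφ' : ∀ x, φ (d x) = 0 := fun x =>
        LinearMap.congr_fun (congrArg Subtype.val hφ : LinearMap.lcomp R C d φ = 0) x
      obtain ⟨χ, hχ⟩ := exists_desc R π hπ φ (by
        intro x hx
        have : x ∈ LinearMap.range d := hd ▸ hx
        obtain ⟨z, rfl⟩ := this
        exact hφ' z)
      have := hm χ
      rwa [hχ] at this)
    obtain ⟨h, hh⟩ := hV _ _ (Submodule.mkQ_surjective _) g
    obtain ⟨x, hx⟩ := bidual_surj R hC h
    have : p - d x = 0 := (hR.projective R) _ fun φ => by
      have h1 : h (LinearMap.lcomp R C d φ) = g (e φ) := hh (e φ)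
      rw [hx, hg] at h1
      have h2 : φ (d x) = φ p := h1
      rw [map_sub, h2, sub_self]
    rw [sub_eq_zero.1 this, hπd]

end Main

/-- (i) if `M` embeds into a finite projective module then `M` is a
`C`-syzygy; (ii) `M` is a `C`-syzygy iff `Ext_R^1(Tr_C(M), C) = 0`. -/
theorem statement1 [IsNoetherianRing R] (hsp : IsSemiperfectRing R)
    (C : ModuleCat.{u} R) (hC : IsSemidualizing R C)
    (M : ModuleCat.{u} R) (hMfin : Module.Finite R ↥M) :
    ((∃ (P : ModuleCat.{u} R), Module.Finite R ↥P ∧ Module.Projective R ↥P ∧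
        ∃ f : ↥M →ₗ[R] ↥P, Function.Injective f) → IsCSyzygy R C M) ∧
    (IsCSyzygy R C M ↔
      ∀ T : ModuleCat.{u} R, IsTransposeC R C M T →
        Subsingleton (ExtM R T C 1)) := by
  obtain ⟨hCfin, hCbij, hCext⟩ := hC
  have hE : EVan R C C := (ext_iff_EVan R C C).1 (hCext 1 one_pos)
  have hEnd : ∀ f : C →ₗ[R] C, ∃ r : R, ∀ c, f c = r • c := fun f => by
    obtain ⟨r, hr⟩ := hCbij.2 f
    exact ⟨r, fun c => by rw [← hr]; rfl⟩
  have hR : SepC R C R := fun r hr => by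
    apply hCbij.1
    ext c
    have h1 : r • c = 0 := hr (LinearMap.toSpanSingleton R C c)
    change r • c = (0 : R) • c
    rw [h1, zero_smul]
  have hsyz : IsCSyzygy R C M ↔ SepC R C M := by
    constructor
    · rintro ⟨P, hP1, hP2, f, hf⟩
      exact (SepC.tensor R).of_inj R f hf
    · intro h
      obtain ⟨n, f, hf⟩ := h.embed R
      exact ⟨ModuleCat.of R (Fin n → R), inferInstanceAs (Module.Finite R (Fin n → R)),
        inferInstanceAs (Module.Projective R (Fin n → R)), f, hf⟩
  have key : ∀ (P1 P0 : ModuleCat.{u} R) (d : ↥P1 →ₗ[R] ↥P0) (π : ↥P0 →ₗ[R] ↥M),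
      IsMinimalPresentation R d π → (SepC R C M ↔
        EVan R C ((↥P1 →ₗ[R] ↥C) ⧸ LinearMap.range (LinearMap.lcomp R ↥C d))) := by
    rintro P1 P0 d π ⟨h1, h2, ⟨h3, h4, -⟩, h5, h6, -⟩
    exact sep_iff_EVan R hE hR hEnd d π h4 h5
  refine ⟨?_, ?_⟩
  · rintro ⟨P, hP1, hP2, f, hf⟩
    exact hsyz.2 ((hR.projective R).of_inj R f hf)
  · rw [hsyz]
    constructor
    · rintro hS T ⟨P1, P0, d, π, hmin, ⟨e⟩⟩
      rw [ext_iff_EVan]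
      exact ((key P1 P0 d π hmin).1 hS).retract R e.toLinearMap e.symm.toLinearMap
        (fun x => e.symm_apply_apply x)
    · intro H
      obtain ⟨P0, π, hP0, hπ⟩ := hsp M hMfin
      obtain ⟨P1, ρ, hP1, hρ⟩ := hsp (ModuleCat.of R (LinearMap.ker π))
        (inferInstanceAs (Module.Finite R (LinearMap.ker π)))
      let ρ' : ↥P1 →ₗ[R] LinearMap.ker π := ρ
      have hρ' : Function.Surjective ρ' := hρ.2.1
      have hker : LinearMap.ker ((LinearMap.ker π).subtype ∘ₗ ρ') = LinearMap.ker ρ' :=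
        LinearMap.ker_comp_of_ker_eq_bot _ (Submodule.ker_subtype _)
      have hmin : IsMinimalPresentation R ((LinearMap.ker π).subtype ∘ₗ ρ') π := by
        refine ⟨hP1, hP0, hπ, ?_, hρ.1, fun N hN => hρ.2.2 N ?_⟩
        · rw [LinearMap.range_comp_of_range_eq_top _ (LinearMap.range_eq_top.2 hρ'),
            Submodule.range_subtype]
        · rw [hker] at hN
          exact hN
      refine (key _ _ _ _ hmin).2 ?_
      exact (ext_iff_EVan R (ModuleCat.of R _) C).1
        (H _ ⟨P1, P0, _, π, hmin, ⟨LinearEquiv.refl R _⟩⟩)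

end
end

section
/- Let M be a reduced G_C-perfect R-module of G_C-dimension n. Then Ext_R^i(Tr_C(M), C) ≅ Ext_R^{i+n-1}(Ext_R^n(M,C), C) for all i > 0. -/
open CategoryTheory TensorProduct

noncomputable section

universe u

variable (R : Type u) [CommRing R]

section Helpers
variable {R}

abbrev EX (C A : ModuleCat.{u} R) (i : ℕ) : Type u := Abelian.Ext.{u} A C i

/-- comparison of the two versions of Ext -/
theorem extM_equiv (C A : ModuleCat.{u} R) (k : ℕ) :
    Nonempty (↥(ExtM R A C (k+1)) ≃ₗ[R] EX C A (k+1)) := by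
  let P := projectiveResolution A
  let S := (P.complex.linearYonedaObj R C).sc' k (k+1) (k+2)
  have e1 : ↥(ExtM R A C (k+1)) ≃ₗ[R] ↥(S.homology) :=
    (P.isoExt (R := R) (k+1) C ≪≫
      (ShortComplex.homologyMapIso ((P.complex.linearYonedaObj R C).isoSc' k (k+1) (k+2)
        (by simp) (by simp)))).toLinearEquiv
  have e2 : ↥(S.homology) ≃ₗ[R]
      (LinearMap.ker S.g.hom ⧸ LinearMap.range S.moduleCatToCycles) :=
    S.moduleCatHomologyIso.toLinearEquiv
  have hc : ∀ f : LinearMap.ker S.g.hom, P.complex.d (k+2) (k+1) ≫ 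
      (show P.complex.X (k+1) ⟶ C from f.1) = 0 := fun f => f.2
  let φ : LinearMap.ker S.g.hom →ₗ[R] EX C A (k+1) :=
    { toFun := fun f => P.extMk (show P.complex.X (k+1) ⟶ C from f.1) (k+2) rfl (hc f)
      map_add' := fun f g => (P.add_extMk _ _ _ _ _ _).symm
      map_smul' := fun r f => by
        rw [Abelian.Ext.smul_eq_comp_mk₀, RingHom.id_apply, P.extMk_comp_mk₀]
        congr 1 }
  have hker : LinearMap.ker φ = LinearMap.range S.moduleCatToCycles := by
    ext f
    rw [LinearMap.mem_ker]
    refine (P.extMk_eq_zero_iff _ (k+2) rfl (hc f) k rfl).trans ?_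
    constructor
    · rintro ⟨g, hg⟩
      exact ⟨g, Subtype.ext hg⟩
    · rintro ⟨g, hg⟩
      exact ⟨g, congrArg Subtype.val hg⟩
  have hsurj : Function.Surjective φ := by
    intro x
    obtain ⟨f, hf, h⟩ := P.extMk_surjective x (k+2) rfl
    exact ⟨⟨f, hf⟩, h⟩
  exact ⟨e1.trans (e2.trans ((Submodule.quotEquivOfEq _ _ hker.symm).trans
    (φ.quotKerEquivOfSurjective hsurj)))⟩

structure SES {A B D : ModuleCat.{u} R} (f : ↥A →ₗ[R] ↥B) (g : ↥B →ₗ[R] ↥D) : Prop where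
  inj : Function.Injective f
  surj : Function.Surjective g
  exact : ∀ b, g b = 0 ↔ ∃ a, f a = b

section LES
variable {A B D : ModuleCat.{u} R} {f : ↥A →ₗ[R] ↥B} {g : ↥B →ₗ[R] ↥D}

theorem SES.zero (h : SES f g) : ModuleCat.ofHom f ≫ ModuleCat.ofHom g = 0 := by
  ext a
  exact (h.exact (f a)).2 ⟨a, rfl⟩

abbrev SES.sc (h : SES f g) : ShortComplex (ModuleCat.{u} R) :=
  ShortComplex.mk (ModuleCat.ofHom f) (ModuleCat.ofHom g) h.zero

theorem SES.shortExact (h : SES f g) : h.sc.ShortExact :=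
  ModuleCat.shortComplex_shortExact _ (fun b => by
    rw [Set.mem_range]; exact h.exact b) h.inj h.surj

variable (C : ModuleCat.{u} R)

open CategoryTheory.Abelian.Ext in
theorem SES.left (h : SES f g) (i : ℕ) (hB : Subsingleton (EX C B i))
    (hD : Subsingleton (EX C D (i+1))) : Subsingleton (EX C A i) := by
  refine subsingleton_of_forall_eq 0 fun x => ?_
  obtain ⟨y, rfl⟩ := contravariant_sequence_exact₁ h.shortExact C x (Nat.add_comm 1 i)
    (hD.elim _ _)
  rw [hB.elim y 0]; simp

open CategoryTheory.Abelian.Ext in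
theorem SES.mid (h : SES f g) (i : ℕ) (hA : Subsingleton (EX C A i))
    (hD : Subsingleton (EX C D i)) : Subsingleton (EX C B i) := by
  refine subsingleton_of_forall_eq 0 fun x => ?_
  obtain ⟨y, rfl⟩ := contravariant_sequence_exact₂ h.shortExact C x (hA.elim _ _)
  rw [hD.elim y 0]; simp

open CategoryTheory.Abelian.Ext in
theorem SES.right (h : SES f g) (i : ℕ) (hA : Subsingleton (EX C A i))
    (hB : Subsingleton (EX C B (i+1))) : Subsingleton (EX C D (i+1)) := by
  refine subsingleton_of_forall_eq 0 fun x => ?_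
  obtain ⟨y, rfl⟩ := contravariant_sequence_exact₃ h.shortExact C x (hB.elim _ _) 
    (Nat.add_comm 1 i)
  rw [hA.elim y 0]; simp

open CategoryTheory.Abelian.Ext in
theorem SES.shift (h : SES f g) (i : ℕ) (hB : Subsingleton (EX C B i))
    (hB' : Subsingleton (EX C B (i+1))) : Nonempty (EX C A i ≃ₗ[R] EX C D (i+1)) := by
  let φ : EX C A i →ₗ[R] EX C D (i+1) :=
    bilinearCompOfLinear R _ _ _ 1 i (i+1) (Nat.add_comm 1 i) h.shortExact.extClass
  refine ⟨LinearEquiv.ofBijective φ ⟨?_, ?_⟩⟩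
  · rw [injective_iff_map_eq_zero]
    intro x hx
    obtain ⟨y, rfl⟩ := contravariant_sequence_exact₁ h.shortExact C x (Nat.add_comm 1 i) hx
    rw [hB.elim y 0]; simp
  · intro x
    exact contravariant_sequence_exact₃ h.shortExact C x (hB'.elim _ _) (Nat.add_comm 1 i)

open CategoryTheory.Abelian.Ext in
theorem SES.isoLeft (h : SES f g) (i : ℕ) (hD : Subsingleton (EX C D i))
    (hD' : Subsingleton (EX C D (i+1))) : Nonempty (EX C B i ≃ₗ[R] EX C A i) := by
  let φ : EX C B i →ₗ[R] EX C A i :=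
    bilinearCompOfLinear R _ _ _ 0 i i (Nat.zero_add i) (mk₀ h.sc.f)
  refine ⟨LinearEquiv.ofBijective φ ⟨?_, ?_⟩⟩
  · rw [injective_iff_map_eq_zero]
    intro x hx
    obtain ⟨y, rfl⟩ := contravariant_sequence_exact₂ h.shortExact C x hx
    rw [hD.elim y 0]; simp
  · intro x
    exact contravariant_sequence_exact₁ h.shortExact C x (Nat.add_comm 1 i) (hD'.elim _ _)

open CategoryTheory.Abelian.Ext in
theorem SES.coker (h : SES f g) (hB : Subsingleton (EX C B 1)) :
    ∃ δ : (↥A →ₗ[R] ↥C) →ₗ[R] EX C D 1, Function.Surjective δ ∧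
      ∀ φ, δ φ = 0 ↔ ∃ ψ : ↥B →ₗ[R] ↥C, ψ ∘ₗ f = φ := by
  let δ₀ : EX C A 0 →ₗ[R] EX C D 1 :=
    bilinearCompOfLinear R _ _ _ 1 0 1 rfl h.shortExact.extClass
  let e : (↥A →ₗ[R] ↥C) ≃ₗ[R] EX C A 0 :=
    (ModuleCat.homLinearEquiv (S := R)).symm.trans (linearEquiv₀ (R := R)).symm
  have he : ∀ φ, e φ = mk₀ (ModuleCat.ofHom φ) := fun φ => rfl
  refine ⟨δ₀ ∘ₗ e.toLinearMap, ?_, ?_⟩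
  · intro x
    obtain ⟨y, hy⟩ := contravariant_sequence_exact₃ h.shortExact C x (hB.elim _ _)
      (show 1 + 0 = 1 from rfl)
    exact ⟨e.symm y, by
      show δ₀ (e (e.symm y)) = x
      rw [e.apply_symm_apply]; exact hy⟩
  · intro φ
    constructor
    · intro hφ
      obtain ⟨y, hy⟩ := contravariant_sequence_exact₁ h.shortExact C (e φ) rfl hφ
      obtain ⟨ψ, rfl⟩ := homEquiv₀.symm.surjective y
      refine ⟨ψ.hom, ?_⟩
      rw [he] at hy
      erw [mk₀_comp_mk₀] at hy
      exact congrArg ModuleCat.Hom.hom (homEquiv₀.symm.injective hy)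
    · rintro ⟨ψ, rfl⟩
      show h.shortExact.extClass.comp (e (ψ ∘ₗ f)) rfl = 0
      rw [he, ModuleCat.ofHom_comp, ← mk₀_comp_mk₀]
      exact h.shortExact.extClass_comp_assoc _

open CategoryTheory.Abelian.Ext in
theorem SES.extend (h : SES f g) (hD : Subsingleton (EX C D 1)) (φ : ↥A →ₗ[R] ↥C) :
    ∃ ψ : ↥B →ₗ[R] ↥C, ψ ∘ₗ f = φ := by
  obtain ⟨y, hy⟩ := contravariant_sequence_exact₁ h.shortExact C (mk₀ (ModuleCat.ofHom φ)) rfl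
    (hD.elim _ _)
  obtain ⟨ψ, rfl⟩ := homEquiv₀.symm.surjective y
  refine ⟨ψ.hom, ?_⟩
  erw [mk₀_comp_mk₀] at hy
  exact congrArg ModuleCat.Hom.hom (homEquiv₀.symm.injective hy)

theorem SES.ext_one (h : SES f g) (hB : Subsingleton (EX C B 1))
    (hφ : ∀ φ : ↥A →ₗ[R] ↥C, ∃ ψ : ↥B →ₗ[R] ↥C, ψ ∘ₗ f = φ) : Subsingleton (EX C D 1) := by
  obtain ⟨δ, hs, hk⟩ := h.coker C hB
  refine subsingleton_of_forall_eq 0 fun x => ?_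
  obtain ⟨φ, rfl⟩ := hs x
  exact (hk φ).2 (hφ φ)

open CategoryTheory.Abelian.Ext in
theorem ex_retract (s : ↥A →ₗ[R] ↥B) (r : ↥B →ₗ[R] ↥A) (h : ∀ a, r (s a) = a) (i : ℕ)
    (hB : Subsingleton (EX C B i)) : Subsingleton (EX C A i) := by
  refine subsingleton_of_forall_eq 0 fun x => ?_
  have : ModuleCat.ofHom s ≫ ModuleCat.ofHom r = 𝟙 A := by ext a; exact h a
  rw [← mk₀_id_comp x, ← this, ← mk₀_comp_mk₀_assoc,
    hB.elim ((mk₀ (ModuleCat.ofHom r)).comp x (zero_add i)) 0]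
  simp

open CategoryTheory.Abelian.Ext in
theorem ex_congr (e : ↥A ≃ₗ[R] ↥B) (i : ℕ) : Nonempty (EX C B i ≃ₗ[R] EX C A i) := by
  have h1 : ModuleCat.ofHom e.toLinearMap ≫ ModuleCat.ofHom e.symm.toLinearMap = 𝟙 A := by
    ext a; exact e.symm_apply_apply a
  have h2 : ModuleCat.ofHom e.symm.toLinearMap ≫ ModuleCat.ofHom e.toLinearMap = 𝟙 B := by
    ext a; exact e.apply_symm_apply a
  exact ⟨LinearEquiv.ofLinearMap
    (bilinearCompOfLinear R _ _ _ 0 i i (Nat.zero_add i) (mk₀ (ModuleCat.ofHom e.toLinearMap)))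
    (bilinearCompOfLinear R _ _ _ 0 i i (Nat.zero_add i)
      (mk₀ (ModuleCat.ofHom e.symm.toLinearMap)))
    (by ext x; simp [bilinearCompOfLinear, h1]) (by ext x; simp [bilinearCompOfLinear, h2])⟩

theorem ex_projective (hA : Module.Projective R ↥A) (i : ℕ) (hi : 0 < i) :
    Subsingleton (EX C A i) := by
  obtain ⟨k, rfl⟩ := Nat.exists_eq_succ_of_ne_zero hi.ne'
  have : Projective A := (IsProjective.iff_projective A).1 hA
  exact Abelian.Ext.subsingleton_of_projective _ _ _

end LES

section TRsec
variable {A B D : ModuleCat.{u} R} {f : ↥A →ₗ[R] ↥B} {g : ↥B →ₗ[R] ↥D}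
variable {C : ModuleCat.{u} R}

theorem SES.lift (h : SES f g) {Z : ModuleCat.{u} R} (φ : ↥Z →ₗ[R] ↥B) (hφ : ∀ z, g (φ z) = 0) :
    ∃ ψ : ↥Z →ₗ[R] ↥A, ∀ z, f (ψ z) = φ z := by
  let e := LinearEquiv.ofInjective f h.inj
  refine ⟨e.symm.toLinearMap ∘ₗ φ.codRestrict (LinearMap.range f)
    (fun z => (h.exact _).1 (hφ z)), fun z => ?_⟩
  exact congrArg Subtype.val (e.apply_symm_apply
    (⟨φ z, (h.exact _).1 (hφ z)⟩ : LinearMap.range f))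

theorem SES.desc (h : SES f g) {Z : ModuleCat.{u} R} (φ : ↥B →ₗ[R] ↥Z) (hφ : ∀ a, φ (f a) = 0) :
    ∃ ψ : ↥D →ₗ[R] ↥Z, ∀ b, ψ (g b) = φ b := by
  let e := g.quotKerEquivOfSurjective h.surj
  have hk : LinearMap.ker g ≤ LinearMap.ker φ := by
    intro b hb
    obtain ⟨a, rfl⟩ := (h.exact b).1 hb
    exact hφ a
  refine ⟨(LinearMap.ker g).liftQ φ hk ∘ₗ e.symm.toLinearMap, fun b => ?_⟩
  have : e.symm (g b) = Submodule.Quotient.mk b := by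
    rw [LinearEquiv.symm_apply_eq]; rfl
  simp [this]

def VV (C A : ModuleCat.{u} R) : Prop := ∀ i : ℕ, 0 < i → Subsingleton (EX C A i)

abbrev DU (C A : ModuleCat.{u} R) : ModuleCat.{u} R := ModuleCat.of R (↥A →ₗ[R] ↥C)

abbrev du (C : ModuleCat.{u} R) (f : ↥A →ₗ[R] ↥B) : ↥(DU C B) →ₗ[R] ↥(DU C A) :=
  LinearMap.lcomp R ↥C f

theorem vv_iff : VV C A ↔ ∀ i : ℕ, 0 < i → Subsingleton (ExtM R A C i) := by
  refine forall_congr' fun i => forall_congr' fun hi => ?_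
  obtain ⟨k, rfl⟩ := Nat.exists_eq_succ_of_ne_zero hi.ne'
  obtain ⟨e⟩ := extM_equiv C A k
  exact e.toEquiv.subsingleton_congr.symm

def TR (C A : ModuleCat.{u} R) : Prop :=
  Module.Finite R ↥A ∧ Function.Bijective (bidualityMap R C A) ∧ VV C A ∧ VV C (DU C A)

theorem tr_iff : IsTotallyCReflexive R C A ↔ TR C A := by
  rw [IsTotallyCReflexive, TR, vv_iff, vv_iff]

theorem SES.dual (h : SES f g) (hD : Subsingleton (EX C D 1)) : SES (du C g) (du C f) where
  inj := fun φ ψ hh => by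
    ext d
    obtain ⟨b, rfl⟩ := h.surj d
    exact LinearMap.congr_fun hh b
  surj := fun φ => h.extend C hD φ
  exact := fun φ => by
    constructor
    · intro hh
      obtain ⟨ψ, hψ⟩ := h.desc φ (fun a => LinearMap.congr_fun hh a)
      exact ⟨ψ, LinearMap.ext hψ⟩
    · rintro ⟨ψ, rfl⟩
      refine LinearMap.ext fun a => ?_
      show ψ (g (f a)) = 0
      rw [(h.exact (f a)).2 ⟨a, rfl⟩, map_zero]

theorem tr_ker [IsNoetherianRing R] (h : SES f g) (hB : TR C B) (hD : TR C D) : TR C A := by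
  obtain ⟨fB, bB, vB, wB⟩ := hB
  obtain ⟨fD, bD, vD, wD⟩ := hD
  have hd := h.dual (vD 1 one_pos)
  refine ⟨Module.Finite.of_injective f h.inj, ⟨?_, ?_⟩, ?_, ?_⟩
  · rw [injective_iff_map_eq_zero]
    intro a ha
    apply h.inj
    rw [map_zero]
    apply bB.1
    rw [map_zero]
    ext ψ
    exact LinearMap.congr_fun ha (ψ ∘ₗ f)
  · intro Φ
    obtain ⟨b, hb⟩ := bB.2 (Φ ∘ₗ du C f)
    have hb' : ∀ ψ : ↥B →ₗ[R] ↥C, ψ b = Φ (ψ ∘ₗ f) := fun ψ => LinearMap.congr_fun hb ψ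
    have : g b = 0 := by
      apply bD.1
      rw [map_zero]
      ext χ
      show (χ ∘ₗ g) b = 0
      rw [hb']
      have : (χ ∘ₗ g) ∘ₗ f = 0 := by
        ext a
        show χ (g (f a)) = 0
        rw [(h.exact (f a)).2 ⟨a, rfl⟩, map_zero]
      rw [this, map_zero]
    obtain ⟨a, rfl⟩ := (h.exact b).1 this
    refine ⟨a, ?_⟩
    ext φ
    obtain ⟨ψ, rfl⟩ := hd.surj φ
    exact hb' ψ
  · intro i hi
    exact h.left C i (vB i hi) (vD (i+1) (by omega))
  · intro i hi
    obtain ⟨k, rfl⟩ := Nat.exists_eq_succ_of_ne_zero hi.ne'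
    rcases Nat.eq_zero_or_pos k with rfl | hk
    · refine hd.ext_one C (wB _ hi) fun Φ => ?_
      obtain ⟨d, rfl⟩ := bD.2 Φ
      obtain ⟨b, rfl⟩ := h.surj d
      exact ⟨bidualityMap R C B b, rfl⟩
    · exact hd.right C k (wD k hk) (wB _ hi)

theorem tr_ext (h : SES f g) (hA : TR C A) (hD : TR C D) : TR C B := by
  obtain ⟨fA, bA, vA, wA⟩ := hA
  obtain ⟨fD, bD, vD, wD⟩ := hD
  have hd := h.dual (vD 1 one_pos)
  refine ⟨?_, ⟨?_, ?_⟩, ?_, ?_⟩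
  · have hr : LinearMap.range f = LinearMap.ker g := by
      ext b; exact (h.exact b).symm
    refine ⟨Submodule.fg_of_fg_map_of_fg_inf_ker g ?_ ?_⟩
    · rw [Submodule.map_top, LinearMap.range_eq_top.2 h.surj]
      exact fD.fg_top
    · rw [top_inf_eq, ← hr, LinearMap.range_eq_map]
      exact fA.fg_top.map f
  · rw [injective_iff_map_eq_zero]
    intro b hb
    have hb' : ∀ ψ : ↥B →ₗ[R] ↥C, ψ b = 0 := fun ψ => LinearMap.congr_fun hb ψ
    have : g b = 0 := by
      apply bD.1
      rw [map_zero]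
      ext χ
      exact hb' (χ ∘ₗ g)
    obtain ⟨a, rfl⟩ := (h.exact b).1 this
    have : a = 0 := by
      apply bA.1
      rw [map_zero]
      ext φ
      obtain ⟨ψ, rfl⟩ := hd.surj φ
      exact hb' ψ
    rw [this, map_zero]
  · intro Φ
    obtain ⟨d, hdd⟩ := bD.2 (Φ ∘ₗ du C g)
    obtain ⟨b, rfl⟩ := h.surj d
    obtain ⟨Ψ, hΨ⟩ := hd.desc (Z := C) (Φ - bidualityMap R C B b) (fun χ => by
      have := LinearMap.congr_fun hdd χ
      rw [LinearMap.sub_apply, sub_eq_zero]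
      exact this.symm)
    obtain ⟨a, rfl⟩ := bA.2 Ψ
    refine ⟨b + f a, ?_⟩
    ext ψ
    have := hΨ ψ
    rw [LinearMap.sub_apply] at this
    rw [map_add, LinearMap.add_apply]
    exact (eq_sub_iff_add_eq'.1 this)
  · intro i hi
    exact h.mid C i (vA i hi) (vD i hi)
  · intro i hi
    exact hd.mid C i (wD i hi) (wA i hi)

theorem tr_retract (s : ↥A →ₗ[R] ↥B) (r : ↥B →ₗ[R] ↥A) (h : ∀ a, r (s a) = a)
    (hB : TR C B) : TR C A := by
  obtain ⟨fB, bB, vB, wB⟩ := hB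
  refine ⟨Module.Finite.of_surjective r (fun a => ⟨s a, h a⟩), ⟨?_, ?_⟩, ?_, ?_⟩
  · rw [injective_iff_map_eq_zero]
    intro a ha
    have : s a = 0 := by
      apply bB.1
      rw [map_zero]
      ext ψ
      exact LinearMap.congr_fun ha (ψ ∘ₗ s)
    rw [← h a, this, map_zero]
  · intro Φ
    obtain ⟨b, hb⟩ := bB.2 (Φ ∘ₗ du C s)
    refine ⟨r b, ?_⟩
    ext φ
    have h1 : φ (r b) = Φ ((φ ∘ₗ r) ∘ₗ s) := LinearMap.congr_fun hb (φ ∘ₗ r)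
    have h2 : (φ ∘ₗ r) ∘ₗ s = φ := by ext a; exact congrArg φ (h a)
    rw [h2] at h1
    exact h1
  · intro i hi
    exact ex_retract C s r h i (vB i hi)
  · intro i hi
    exact ex_retract C (du C r) (du C s) (fun φ => by ext a; exact congrArg φ (h a)) i (wB i hi)

theorem tr_ring (hC : IsSemidualizing R C) : TR C (ModuleCat.of R R) := by
  obtain ⟨hf, hb, hv⟩ := hC
  refine ⟨inferInstanceAs (Module.Finite R R), ⟨?_, ?_⟩, fun i hi => ex_projective C
    (inferInstanceAs (Module.Projective R R)) i hi, ?_⟩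
  · rw [injective_iff_map_eq_zero]
    intro r hr
    apply hb.1
    ext c
    have : (LinearMap.toSpanSingleton R ↥C c) r = 0 :=
      LinearMap.congr_fun hr (LinearMap.toSpanSingleton R ↥C c)
    show r • c = (0 : R) • c
    rw [zero_smul]
    exact this
  · intro Φ
    let e : (R →ₗ[R] ↥C) ≃ₗ[R] ↥C := LinearMap.ringLmapEquivSelf R R ↥C
    obtain ⟨r, hr⟩ := hb.2 (Φ ∘ₗ e.symm.toLinearMap)
    refine ⟨r, ?_⟩
    refine LinearMap.ext fun φ => ?_
    have h1 := LinearMap.congr_fun hr (e φ)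
    simp only [LinearMap.comp_apply, LinearEquiv.coe_coe, e.symm_apply_apply] at h1
    refine Eq.trans ?_ h1
    show φ r = r • φ 1
    rw [← map_smul, smul_eq_mul, mul_one]
  · intro i hi
    let e : (R →ₗ[R] ↥C) ≃ₗ[R] ↥C := LinearMap.ringLmapEquivSelf R R ↥C
    exact ex_retract (A := DU C (ModuleCat.of R R)) C e.toLinearMap e.symm.toLinearMap
      (fun φ => e.symm_apply_apply φ) i (vv_iff.2 hv i hi)

theorem tr_free (hC : IsSemidualizing R C) (n : ℕ) : TR C (ModuleCat.of R (Fin n → R)) := by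
  induction n with
  | zero =>
    have h0 : Subsingleton (Fin 0 → R) := inferInstance
    have hs : Subsingleton ((Fin 0 → R) →ₗ[R] ↥C) := inferInstance
    have hs2 : Subsingleton (((Fin 0 → R) →ₗ[R] ↥C) →ₗ[R] ↥C) := inferInstance
    refine ⟨inferInstanceAs (Module.Finite R (Fin 0 → R)), ⟨?_, ?_⟩, fun i hi => ex_projective C
      (inferInstanceAs (Module.Projective R (Fin 0 → R))) i hi, fun i hi => ex_projective C
      (inferInstanceAs (Module.Projective R ((Fin 0 → R) →ₗ[R] ↥C))) i hi⟩
    · exact fun a b _ => h0.elim a b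
    · exact fun Φ => ⟨(0 : Fin 0 → R), hs2.elim _ _⟩
  | succ n ih =>
    refine tr_ext (A := ModuleCat.of R R) (D := ModuleCat.of R (Fin n → R))
      (f := LinearMap.single R (fun _ : Fin (n+1) => R) 0)
      (g := LinearMap.funLeft R R Fin.succ) ⟨?_, ?_, ?_⟩ (tr_ring hC) ih
    · exact Pi.single_injective (M := fun _ : Fin (n+1) => R) 0
    · exact fun v => ⟨Fin.cons 0 v, by ext j; rfl⟩
    · intro b
      constructor
      · intro hb
        refine ⟨(b : Fin (n+1) → R) 0, ?_⟩
        refine funext fun j => ?_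
        refine Fin.cases ?_ (fun j => ?_) j
        · exact Pi.single_eq_same (M := fun _ : Fin (n+1) => R) 0 _
        · refine Eq.trans (Pi.single_eq_of_ne (M := fun _ : Fin (n+1) => R) (Fin.succ_ne_zero j)
            ((b : Fin (n+1) → R) 0)) ?_
          exact (congrFun hb j).symm
      · rintro ⟨a, rfl⟩
        refine funext fun j => ?_
        exact Pi.single_eq_of_ne (M := fun _ : Fin (n+1) => R) (Fin.succ_ne_zero j) (a : R)

theorem tr_proj (hC : IsSemidualizing R C) (hA : Module.Finite R ↥A)
    (hP : Module.Projective R ↥A) : TR C A := by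
  obtain ⟨n, r, hr⟩ := Module.Finite.exists_fin' R ↥A
  obtain ⟨s, hs⟩ := Module.projective_lifting_property r LinearMap.id hr
  exact tr_retract (B := ModuleCat.of R (Fin n → R)) s r (fun a => LinearMap.congr_fun hs a)
    (tr_free hC n)

end TRsec

section GC
variable {C : ModuleCat.{u} R}

theorem gc_ker [IsNoetherianRing R] (n : ℕ) {K Y X : ModuleCat.{u} R} {f : ↥K →ₗ[R] ↥Y}
    {g : ↥Y →ₗ[R] ↥X} (h : SES f g) (hX : TR C X) (hY : gcdimLE R C n Y) : gcdimLE R C n K := by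
  cases n with
  | zero => exact tr_iff.2 (tr_ker h (tr_iff.1 hY) hX)
  | succ n =>
    obtain ⟨X', L, f', g', hf', hg', hk, hX', hL⟩ := hY
    have hex : ∀ b, g' b = 0 ↔ ∃ a, f' a = b := fun b => by
      rw [← LinearMap.mem_ker, hk]; rfl
    let X'' : ModuleCat.{u} R := ModuleCat.of R (LinearMap.ker (g ∘ₗ g'))
    let ι : ↥X'' →ₗ[R] ↥X' := (LinearMap.ker (g ∘ₗ g')).subtype
    have h2 : SES ι (g ∘ₗ g') := ⟨Subtype.val_injective, h.surj.comp hg', fun b =>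
      ⟨fun hb => ⟨⟨b, hb⟩, rfl⟩, by rintro ⟨a, rfl⟩; exact a.2⟩⟩
    obtain ⟨ψ, hψ⟩ := h.lift (g' ∘ₗ ι) (fun z => z.2)
    obtain ⟨f'', hf''⟩ := h2.lift f' (fun z => by
      show g (g' (f' z)) = 0
      rw [(hex _).2 ⟨z, rfl⟩, map_zero])
    refine ⟨X'', L, f'', ψ, ?_, ?_, ?_, ?_, hL⟩
    · intro a b hab
      apply hf'
      rw [← hf'', ← hf'', hab]
    · intro k
      obtain ⟨x, hx⟩ := hg' (f k)
      have : g (g' x) = 0 := by rw [hx]; exact (h.exact _).2 ⟨k, rfl⟩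
      refine ⟨(⟨x, this⟩ : LinearMap.ker (g ∘ₗ g')), ?_⟩
      apply h.inj
      rw [hψ]
      exact hx
    · ext z
      rw [LinearMap.mem_ker, LinearMap.mem_range]
      constructor
      · intro hz
        have h3 : g' (ι z) = 0 := by
          have := hψ z
          rw [hz, map_zero] at this
          exact this.symm
        obtain ⟨a, ha⟩ := (hex _).1 h3
        exact ⟨a, h2.inj (by rw [hf'', ha])⟩
      · rintro ⟨a, rfl⟩
        apply h.inj
        rw [hψ, map_zero]
        show g' (ι (f'' a)) = 0
        rw [hf'']
        exact (hex _).2 ⟨a, rfl⟩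
    · exact tr_iff.2 (tr_ker h2 (tr_iff.1 hX') hX)

theorem ses_prod (A P : ModuleCat.{u} R) :
    SES (B := ModuleCat.of R (↥A × ↥P)) (LinearMap.inl R ↥A ↥P) (LinearMap.snd R ↥A ↥P) :=
  ⟨LinearMap.inl_injective, LinearMap.snd_surjective, fun b => 
    ⟨fun hb => ⟨b.1, Prod.ext rfl (Eq.symm hb)⟩, by rintro ⟨a, rfl⟩; rfl⟩⟩

theorem gc_prod (n : ℕ) {A P : ModuleCat.{u} R} (hP : TR C P) (hA : gcdimLE R C n A) :
    gcdimLE R C n (ModuleCat.of R (↥A × ↥P)) := by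
  cases n with
  | zero => exact tr_iff.2 (tr_ext (ses_prod A P) (tr_iff.1 hA) hP)
  | succ n =>
    obtain ⟨X, L, f, g, hf, hg, hk, hX, hL⟩ := hA
    refine ⟨ModuleCat.of R (↥X × ↥P), L, LinearMap.inl R ↥X ↥P ∘ₗ f,
      g.prodMap LinearMap.id, LinearMap.inl_injective.comp hf, ?_, ?_, ?_, hL⟩
    · rintro ⟨a, p⟩
      obtain ⟨x, rfl⟩ := hg a
      exact ⟨(x, p), rfl⟩
    · ext ⟨x, p⟩
      have : g x = 0 ↔ ∃ a, f a = x := by rw [← LinearMap.mem_ker, hk]; rfl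
      rw [LinearMap.mem_ker, LinearMap.mem_range]
      constructor
      · intro hh
        have h1 : g x = 0 := congrArg Prod.fst hh
        have h2 : p = 0 := congrArg Prod.snd hh
        obtain ⟨a, rfl⟩ := this.1 h1
        subst h2
        exact ⟨a, rfl⟩
      · rintro ⟨a, ha⟩
        have h1 : f a = x := congrArg Prod.fst ha
        have h2 : 0 = p := congrArg Prod.snd ha
        subst h2
        exact Prod.ext (this.2 ⟨a, h1⟩) rfl
    · exact tr_iff.2 (tr_ext (ses_prod X P) (tr_iff.1 hX) hP)

theorem gc_syz [IsNoetherianRing R] (n : ℕ) {K P M : ModuleCat.{u} R} {ι : ↥K →ₗ[R] ↥P}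
    {π : ↥P →ₗ[R] ↥M} (h : SES ι π) (hP : TR C P) (hpr : Module.Projective R ↥P)
    (hM : gcdimLE R C (n+1) M) : gcdimLE R C n K := by
  obtain ⟨X, K', f, g, hf, hg, hk, hX, hK'⟩ := hM
  have hs : SES f g := ⟨hf, hg, fun b => by rw [← LinearMap.mem_ker, hk]; rfl⟩
  obtain ⟨l, hl⟩ := Module.projective_lifting_property g π hg
  have hl' : ∀ p, g (l p) = π p := fun p => LinearMap.congr_fun hl p
  have hπι : ∀ k, π (ι k) = 0 := fun k => (h.exact _).2 ⟨k, rfl⟩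
  have hgf : ∀ k, g (f k) = 0 := fun k => (hs.exact _).2 ⟨k, rfl⟩
  obtain ⟨j, hj⟩ := hs.lift (l ∘ₗ ι) (fun z => by
    show g (l (ι z)) = 0
    rw [hl', hπι])
  have hj' : ∀ z, f (j z) = l (ι z) := hj
  refine gc_ker (C := C) n (Y := ModuleCat.of R (↥K' × ↥P)) (X := X) (f := j.prod ι)
    (g := l ∘ₗ LinearMap.snd R ↥K' ↥P - f ∘ₗ LinearMap.fst R ↥K' ↥P) ⟨?_, ?_, ?_⟩
    (tr_iff.1 hX) (gc_prod n hP hK')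
  · intro a b hab
    exact h.inj (congrArg Prod.snd hab)
  · intro x
    obtain ⟨p, hp⟩ := h.surj (g x)
    have : g (l p - x) = 0 := by rw [map_sub, hl', hp, sub_self]
    obtain ⟨k, hk⟩ := (hs.exact _).1 this
    refine ⟨(k, p), ?_⟩
    show l p - f k = x
    rw [hk, sub_sub_cancel]
  · rintro ⟨k, p⟩
    constructor
    · intro hh
      have hh' : l p = f k := sub_eq_zero.1 hh
      have : π p = 0 := by rw [← hl', hh', hgf]
      obtain ⟨z, rfl⟩ := (h.exact _).1 this
      refine ⟨z, Prod.ext (hf ?_) rfl⟩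
      exact (hj' z).trans hh'
    · rintro ⟨z, hz⟩
      have h1 : j z = k := congrArg Prod.fst hz
      have h2 : ι z = p := congrArg Prod.snd hz
      subst h1 h2
      show l (ι z) - f (j z) = 0
      rw [hj', sub_self]

end GC

theorem ses_ker {A B : ModuleCat.{u} R} (g : ↥A →ₗ[R] ↥B) (hg : Function.Surjective g) :
    SES (A := ModuleCat.of R (LinearMap.ker g)) (LinearMap.ker g).subtype g :=
  ⟨Subtype.val_injective, hg, fun b =>
    ⟨fun hb => ⟨⟨b, hb⟩, rfl⟩, by rintro ⟨a, rfl⟩; exact a.2⟩⟩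

abbrev TrM (C : ModuleCat.{u} R) {P1 P0 : ModuleCat.{u} R} (d : ↥P1 →ₗ[R] ↥P0) :
    ModuleCat.{u} R :=
  ModuleCat.of R ((↥P1 →ₗ[R] ↥C) ⧸ LinearMap.range (LinearMap.lcomp R ↥C d))

theorem main_base [IsNoetherianRing R] {C : ModuleCat.{u} R} (hC : IsSemidualizing R C)
    {M P1 P0 N : ModuleCat.{u} R} (d' : ↥P1 →ₗ[R] ↥N) (ι : ↥N →ₗ[R] ↥P0) (π : ↥P0 →ₗ[R] ↥M)
    (f1 : Module.Finite R ↥P1) (f0 : Module.Finite R ↥P0)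
    (p1 : Module.Projective R ↥P1) (p0 : Module.Projective R ↥P0)
    (hd' : Function.Surjective d') (h : SES ι π) (hM : gcdimLE R C 1 M) (i : ℕ) (hi : 0 < i) :
    Nonempty (EX C (TrM C (ι ∘ₗ d')) i ≃ₗ[R] EX C (ModuleCat.of R (EX C M 1)) i) := by
  have tN : TR C N := tr_iff.1 (gc_syz 0 h (tr_proj hC f0 p0) p0 hM)
  let K : ModuleCat.{u} R := ModuleCat.of R (LinearMap.ker d')
  let κ : ↥K →ₗ[R] ↥P1 := (LinearMap.ker d').subtype
  have hκ : SES κ d' := ses_ker d' hd'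
  have tK : TR C K := tr_ker hκ (tr_proj hC f1 p1) tN
  have hd := hκ.dual (C := C) (tN.2.2.1 1 one_pos)
  obtain ⟨δ, hδs, hδ⟩ := h.coker C (ex_projective C p0 1 one_pos)
  let Q := LinearMap.range (LinearMap.lcomp R ↥C (ι ∘ₗ d'))
  have hQ : Q ≤ LinearMap.ker (du C κ) := by
    rintro _ ⟨φ, rfl⟩
    refine LinearMap.ext fun k => ?_
    show φ (ι (d' (κ k))) = 0
    rw [(hκ.exact _).2 ⟨k, rfl⟩, map_zero, map_zero]
  let ρ : ↥(TrM C (ι ∘ₗ d')) →ₗ[R] ↥(DU C K) := Q.liftQ (du C κ) hQ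
  have hρ : Function.Surjective ρ := fun φ => by
    obtain ⟨ψ, rfl⟩ := hd.surj φ
    exact ⟨Submodule.Quotient.mk ψ, rfl⟩
  let γ : (↥N →ₗ[R] ↥C) →ₗ[R] ↥(TrM C (ι ∘ₗ d')) := Q.mkQ ∘ₗ du C d'
  have hγk : LinearMap.ker γ = LinearMap.ker δ := by
    ext φ
    rw [LinearMap.mem_ker, LinearMap.mem_ker, hδ]
    refine (Submodule.Quotient.mk_eq_zero Q).trans ?_
    constructor
    · rintro ⟨ψ, hψ⟩
      exact ⟨ψ, hd.inj hψ⟩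
    · rintro ⟨ψ, rfl⟩
      exact ⟨ψ, rfl⟩
  have hγr : LinearMap.range γ = LinearMap.ker ρ := by
    ext z
    obtain ⟨φ, rfl⟩ := Submodule.Quotient.mk_surjective Q z
    rw [LinearMap.mem_ker]
    constructor
    · rintro ⟨ψ, hψ⟩
      rw [← hψ]
      exact (hd.exact _).2 ⟨ψ, rfl⟩
    · intro hz
      obtain ⟨ψ, hψ⟩ := (hd.exact φ).1 hz
      exact ⟨ψ, congrArg Q.mkQ hψ⟩
  let e : EX C M 1 ≃ₗ[R] LinearMap.ker ρ :=
    (δ.quotKerEquivOfSurjective hδs).symm.trans ((Submodule.quotEquivOfEq _ _ hγk.symm).trans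
      (γ.quotKerEquivRange.trans (LinearEquiv.ofEq _ _ hγr)))
  have hs := ses_ker ρ hρ
  obtain ⟨e1⟩ := hs.isoLeft C i (tK.2.2.2 i hi) (tK.2.2.2 (i+1) (by omega))
  obtain ⟨e2⟩ := ex_congr (A := ModuleCat.of R (EX C M 1))
    (B := ModuleCat.of R (LinearMap.ker ρ)) C e i
  exact ⟨e1.trans e2⟩

theorem main_ind [IsNoetherianRing R] {C : ModuleCat.{u} R} (hC : IsSemidualizing R C) (n : ℕ) :
    ∀ {M P1 P0 N : ModuleCat.{u} R} (d' : ↥P1 →ₗ[R] ↥N) (ι : ↥N →ₗ[R] ↥P0) (π : ↥P0 →ₗ[R] ↥M),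
    Module.Finite R ↥P1 → Module.Finite R ↥P0 →
    Module.Projective R ↥P1 → Module.Projective R ↥P0 →
    Function.Surjective d' → SES ι π → gcdimLE R C (n+1) M →
    (∀ i, 0 < i → i < n+1 → Subsingleton (EX C M i)) → ∀ i, 0 < i → 
    Nonempty (EX C (TrM C (ι ∘ₗ d')) i ≃ₗ[R] EX C (ModuleCat.of R (EX C M (n+1))) (i+n)) := by
  induction n with
  | zero =>
    intro M P1 P0 N d' ι π f1 f0 p1 p0 hd' h hM _ i hi
    exact main_base hC d' ι π f1 f0 p1 p0 hd' h hM i hi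
  | succ n ih =>
    intro M P1 P0 N d' ι π f1 f0 p1 p0 hd' h hM hv i hi
    have gN : gcdimLE R C (n+1) N := gc_syz (n+1) h (tr_proj hC f0 p0) p0 hM
    have vN : ∀ i, 0 < i → i < n+1 → Subsingleton (EX C N i) := fun i hi hin =>
      h.left C i (ex_projective C p0 i hi) (hv (i+1) (by omega) (by omega))
    let K : ModuleCat.{u} R := ModuleCat.of R (LinearMap.ker d')
    let κ : ↥K →ₗ[R] ↥P1 := (LinearMap.ker d').subtype
    have hκ : SES κ d' := ses_ker d' hd'
    have fK : Module.Finite R ↥K := Module.Finite.of_injective κ hκ.inj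
    obtain ⟨m, q, hq⟩ := Module.Finite.exists_fin' R ↥K
    let P2 : ModuleCat.{u} R := ModuleCat.of R (Fin m → R)
    have f2 : Module.Finite R ↥P2 := inferInstanceAs (Module.Finite R (Fin m → R))
    have p2 : Module.Projective R ↥P2 := inferInstanceAs (Module.Projective R (Fin m → R))
    obtain ⟨e2⟩ := ih (M := N) (P1 := P2) (P0 := P1) q κ d' f2 f1 p2 p1 hq hκ gN vN (i+1)
      (by omega)
    let d2 : ↥P2 →ₗ[R] ↥P1 := κ ∘ₗ q
    let Q := LinearMap.range (LinearMap.lcomp R ↥C (ι ∘ₗ d'))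
    have hQ : Q ≤ LinearMap.ker (du C d2) := by
      rintro _ ⟨φ, rfl⟩
      refine LinearMap.ext fun k => ?_
      show φ (ι (d' (κ (q k)))) = 0
      rw [(hκ.exact _).2 ⟨q k, rfl⟩, map_zero, map_zero]
    let α : ↥(TrM C (ι ∘ₗ d')) →ₗ[R] ↥(DU C P2) := Q.liftQ (du C d2) hQ
    let β : ↥(DU C P2) →ₗ[R] ↥(TrM C d2) := (LinearMap.range (LinearMap.lcomp R ↥C d2)).mkQ
    have hs : SES α β := by
      refine ⟨?_, Submodule.mkQ_surjective _, ?_⟩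
      · rw [injective_iff_map_eq_zero]
        intro z hz
        obtain ⟨φ, rfl⟩ := Submodule.Quotient.mk_surjective Q z
        refine (Submodule.Quotient.mk_eq_zero Q).2 ?_
        obtain ⟨ψ, hψ⟩ := hκ.desc φ (fun k => by
          obtain ⟨x, rfl⟩ := hq k
          exact LinearMap.congr_fun hz x)
        obtain ⟨χ, hχ⟩ := h.extend C (hv 1 one_pos (by omega)) ψ
        refine ⟨χ, LinearMap.ext fun x => ?_⟩
        rw [← hψ, ← hχ]
        rfl
      · intro b
        refine (Submodule.Quotient.mk_eq_zero _).trans ?_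
        constructor
        · rintro ⟨φ, rfl⟩
          exact ⟨Submodule.Quotient.mk φ, rfl⟩
        · rintro ⟨z, rfl⟩
          obtain ⟨φ, rfl⟩ := Submodule.Quotient.mk_surjective Q z
          exact ⟨φ, rfl⟩
    have t2 := tr_proj hC f2 p2
    obtain ⟨e1⟩ := hs.shift C i (t2.2.2.2 i hi) (t2.2.2.2 (i+1) (by omega))
    obtain ⟨e3⟩ := h.shift C (n+1) (ex_projective C p0 _ (by omega))
      (ex_projective C p0 _ (by omega))
    obtain ⟨e4⟩ := ex_congr (A := ModuleCat.of R (EX C M (n+1+1)))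
      (B := ModuleCat.of R (EX C N (n+1))) C e3.symm (i+1+n)
    have hn : i + (n+1) = i + 1 + n := by omega
    rw [hn]
    exact ⟨e1.trans (e2.trans e4)⟩

end Helpers

/-- if `M` is reduced `G_C`-perfect of `G_C`-dimension `n`, then
`Ext_R^i(Tr_C(M), C) ≅ Ext_R^{i+n-1}(Ext_R^n(M,C), C)` for all `i > 0`. -/
theorem statement2 [IsNoetherianRing R] (hsp : IsSemiperfectRing R)
    (C : ModuleCat.{u} R) (hC : IsSemidualizing R C)
    (M : ModuleCat.{u} R) (hMfin : Module.Finite R ↥M)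
    (n : ℕ) (hred : IsReducedGCPerfect R C M) (hdim : gcdim R C M = n) :
    ∀ T : ModuleCat.{u} R, IsTransposeC R C M T →
      ∀ i : ℕ, 0 < i →
        Nonempty (↥(ExtM R T C i) ≃ₗ[R]
          ↥(ExtM R (ExtM R M C n) C (i + n - 1))) := by
  intro T hT i hi
  obtain ⟨P1, P0, d, π, ⟨f1, f0, ⟨p0, hπ, -⟩, hr, p1, -⟩, ⟨eT⟩⟩ := hT
  have hrg : rgrade R C M = n := hred.2.trans hdim
  have hle : ∀ i : ℕ, 0 < i → i < n → Subsingleton (ExtM R M C i) := by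
    intro i hi hin
    by_contra hns
    have : rgrade R C M ≤ (i : ℕ∞) := sInf_le ⟨i, ⟨hi, hns⟩, rfl⟩
    rw [hrg] at this
    exact absurd (Nat.cast_le.1 this) (by omega)
  have hne : ((fun n : ℕ => (n : ℕ∞)) '' {n | gcdimLE R C n M}).Nonempty := by
    rw [Set.nonempty_iff_ne_empty]
    intro h0
    apply hred.1
    rw [gcdim, h0, sInf_empty]
  have hG : gcdimLE R C n M := by
    obtain ⟨k, hk, hk'⟩ := csInf_mem hne
    have h2 : ((k : ℕ) : ℕ∞) = n := hk'.trans hdim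
    rw [Nat.cast_inj] at h2
    exact h2 ▸ hk
  have hn : 0 < n := by
    rcases Nat.eq_zero_or_pos n with h0 | h0
    · exfalso
      have h1 : (1 : ℕ∞) ≤ rgrade R C M := by
        refine le_sInf ?_
        rintro _ ⟨j, ⟨hj, -⟩, rfl⟩
        show (1 : ℕ∞) ≤ (j : ℕ∞)
        exact_mod_cast hj
      rw [hrg, h0] at h1
      exact absurd h1 (by simp)
    · exact h0
  obtain ⟨m, rfl⟩ := Nat.exists_eq_succ_of_ne_zero hn.ne'
  have hv : ∀ i, 0 < i → i < m + 1 → Subsingleton (EX C M i) := by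
    intro i hi hin
    obtain ⟨k, rfl⟩ := Nat.exists_eq_succ_of_ne_zero hi.ne'
    obtain ⟨e⟩ := extM_equiv C M k
    have := hle _ hi hin
    exact e.symm.toEquiv.subsingleton
  let N : ModuleCat.{u} R := ModuleCat.of R (LinearMap.ker π)
  let ι : ↥N →ₗ[R] ↥P0 := (LinearMap.ker π).subtype
  have hι : SES ι π := ses_ker π hπ
  let d' : ↥P1 →ₗ[R] ↥N := d.codRestrict (LinearMap.ker π)
    (fun x => hr ▸ LinearMap.mem_range_self d x)
  have hd' : Function.Surjective d' := by
    rintro ⟨y, hy⟩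
    have hy' := hy
    rw [← hr] at hy'
    obtain ⟨x, hx⟩ := hy'
    exact ⟨x, Subtype.ext hx⟩
  obtain ⟨e1⟩ := main_ind hC m d' ι π f1 f0 p1 p0 hd' hι hG hv i hi
  obtain ⟨e2⟩ := ex_congr (A := T) (B := TrM C (ι ∘ₗ d')) C eT i
  obtain ⟨e3⟩ := extM_equiv C M m
  obtain ⟨e4⟩ := ex_congr (A := ExtM R M C (m+1)) (B := ModuleCat.of R (EX C M (m+1))) C e3 (i+m)
  obtain ⟨k, rfl⟩ := Nat.exists_eq_succ_of_ne_zero hi.ne'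
  obtain ⟨e5⟩ := extM_equiv C T k
  obtain ⟨e6⟩ := extM_equiv C (ExtM R M C (m+1)) (k+m)
  have hidx : k.succ + m = k + m + 1 := by omega
  have hidx2 : k.succ + m.succ - 1 = k + m + 1 := by omega
  rw [hidx2]
  rw [hidx] at e1 e4
  exact ⟨e5.trans (e2.symm.trans (e1.trans (e4.trans e6.symm)))⟩

end
end

section
/- Let M be a reduced G_C-perfect R-module of G_C-dimension n. Then G_C-dim_R(M) + G_C-dim_R(Tr_C(M)) = G_C-dim_R(Ext_R^n(M,C)) + 1 (as an equality in ℕ ∪ {∞}; in particular Tr_C(M) has finite G_C-dimension if and only if Ext_R^n(M,C) does). -/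
open CategoryTheory TensorProduct

noncomputable section

universe u

variable (R : Type u) [CommRing R]

section Helpers


/-- Short exact sequences of modules. -/
structure SESX {A B D : Type u} [AddCommGroup A] [AddCommGroup B] [AddCommGroup D]
    [Module R A] [Module R B] [Module R D] (f : A →ₗ[R] B) (g : B →ₗ[R] D) : Prop where
  inj : Function.Injective f
  surj : Function.Surjective g
  exact : Function.Exact f g

variable {R}

section Splice
variable {K P M : ModuleCat.{u} R} (f : K ⟶ P) (g : P ⟶ M)

/-- The augmentation of a projective resolution. -/
def resAug (Q : ProjectiveResolution K) : Q.complex.X 0 ⟶ K := Q.π.f 0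

theorem resAug_surj (Q : ProjectiveResolution K) : Function.Surjective (resAug Q).hom :=
  (ModuleCat.epi_iff_surjective (Q.π.f 0)).1 inferInstance

theorem resAug_d (Q : ProjectiveResolution K) (x : Q.complex.X 1) :
    (resAug Q).hom ((Q.complex.d 1 0).hom x) = 0 := by
  have := congrArg (fun φ => φ.hom x) Q.complex_d_comp_π_f_zero
  exact this

theorem resAug_exact (Q : ProjectiveResolution K) (x : Q.complex.X 0)
    (hx : (resAug Q).hom x = 0) : ∃ y, (Q.complex.d 1 0).hom y = x := by
  have e := Q.exact₀
  rw [ShortComplex.moduleCat_exact_iff] at e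
  exact e x hx

theorem splice_w (Q : ProjectiveResolution K) : Q.complex.d 1 0 ≫ (resAug Q ≫ f) = 0 := by
  ext x
  show f.hom ((resAug Q).hom ((Q.complex.d 1 0).hom x)) = 0
  rw [resAug_d, map_zero]

def spliceComplex (Q : ProjectiveResolution K) : ChainComplex (ModuleCat.{u} R) ℕ :=
  ChainComplex.augment Q.complex (X := P) (resAug Q ≫ f) (splice_w f Q)

theorem splice_exactAt (h : SESX R f.hom g.hom) (Q : ProjectiveResolution K) (n : ℕ) :
    (spliceComplex f Q).ExactAt (n + 1) := by
  rw [HomologicalComplex.exactAt_iff' _ (n + 1 + 1) (n + 1) n (by simp) (by simp)]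
  match n with
  | 0 =>
    rw [ShortComplex.moduleCat_exact_iff]
    intro x hx
    have hx' : f.hom ((resAug Q).hom x) = 0 := hx
    exact resAug_exact Q x (h.inj (hx'.trans (map_zero f.hom).symm))
  | n + 1 => exact Q.exact_succ n

theorem splice_proj (hP : Module.Projective R P) (Q : ProjectiveResolution K) (n : ℕ) :
    Projective ((spliceComplex f Q).X n) := by
  match n with
  | 0 => exact (IsProjective.iff_projective P).1 hP
  | n + 1 => exact Q.projective n

def spliceRes (h : SESX R f.hom g.hom) (hP : Module.Projective R P) (Q : ProjectiveResolution K) :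
    ProjectiveResolution M where
  complex := spliceComplex f Q
  projective := splice_proj f hP Q
  π := (ChainComplex.toSingle₀Equiv _ _).symm ⟨g, by
    show (resAug Q ≫ f) ≫ g = 0
    ext x
    exact h.exact.apply_apply_eq_zero _⟩
  quasiIso := ⟨fun n => by
    cases n
    · rw [ChainComplex.quasiIsoAt₀_iff, ShortComplex.quasiIso_iff_of_zeros']
      · have e1 : (ShortComplex.mk (resAug Q ≫ f) g (by
            ext x
            exact h.exact.apply_apply_eq_zero _)).Exact := by
          rw [ShortComplex.moduleCat_exact_iff]
          intro x hx
          obtain ⟨y, hy⟩ := (h.exact x).1 hx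
          obtain ⟨z, hz⟩ := resAug_surj Q y
          refine ⟨z, ?_⟩
          show f.hom ((resAug Q).hom z) = x
          rw [← hy]; exact congrArg f.hom hz
        refine (ShortComplex.exact_and_epi_g_iff_of_iso ?_).2
          ⟨e1, (ModuleCat.epi_iff_surjective g).2 h.surj⟩
        exact ShortComplex.isoMk (Iso.refl _) (Iso.refl _) (Iso.refl _)
          (by rfl) (by rfl)
      all_goals rfl
    · rw [quasiIsoAt_iff_exactAt']
      · apply splice_exactAt f g h
      · apply ChainComplex.exactAt_succ_single_obj⟩
end Splice


theorem exists_factor {B D C : Type*} [AddCommGroup B] [AddCommGroup D] [AddCommGroup C]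
    [Module R B] [Module R D] [Module R C] (g : B →ₗ[R] D) (hg : Function.Surjective g)
    (ψ : B →ₗ[R] C) (hk : ∀ x, g x = 0 → ψ x = 0) :
    ∃ φ : D →ₗ[R] C, ∀ x, φ (g x) = ψ x := by
  have hk' : LinearMap.ker g ≤ LinearMap.ker ψ := fun x hx => hk x hx
  let e := LinearMap.quotKerEquivOfSurjective g hg
  refine ⟨(LinearMap.ker g).liftQ ψ hk' ∘ₗ e.symm.toLinearMap, fun x => ?_⟩
  have : e.symm (g x) = Submodule.Quotient.mk x := by
    rw [LinearEquiv.symm_apply_eq]; rfl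
  show (LinearMap.ker g).liftQ ψ hk' (e.symm (g x)) = ψ x
  rw [this]; rfl

section ExtCompute
variable {K P M : ModuleCat.{u} R} (f : K ⟶ P) (g : P ⟶ M)

def linScIso (X : ChainComplex (ModuleCat.{u} R) ℕ) (Y : ModuleCat.{u} R) (n : ℕ) :
    (X.linearYonedaObj R Y).homology (n + 1) ≅
      ((X.linearYonedaObj R Y).sc' n (n + 1) (n + 2)).homology :=
  ShortComplex.homologyMapIso
    ((X.linearYonedaObj R Y).isoSc' n (n + 1) (n + 2) (by simp) (by simp))

theorem ext_shift' (h : SESX R f.hom g.hom) (hP : Module.Projective R P) (C : ModuleCat.{u} R)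
    (i : ℕ) : Nonempty (ExtM R M C (i + 2) ≅ ExtM R K C (i + 1)) := by
  let Q := ProjectiveResolution.of K
  let Q' := spliceRes f g h hP Q
  refine ⟨Q'.isoExt (i + 2) C ≪≫ linScIso _ C (i + 1) ≪≫ ?_ ≪≫ (linScIso _ C i).symm ≪≫
    (Q.isoExt (i + 1) C).symm⟩
  exact Iso.refl _

/-- the comparison map -/
def homToCycles (h : SESX R f.hom g.hom) (hP : Module.Projective R P) (C : ModuleCat.{u} R) :
    (K →ₗ[R] C) →ₗ[R] LinearMap.ker
      (((spliceRes f g h hP (ProjectiveResolution.of K)).complex.linearYonedaObj R C).sc'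
        0 1 2).g.hom where
  toFun φ := ⟨resAug (ProjectiveResolution.of K) ≫ ModuleCat.ofHom φ, by
    show (ProjectiveResolution.of K).complex.d 1 0 ≫
      (resAug (ProjectiveResolution.of K) ≫ ModuleCat.ofHom φ) = 0
    exact splice_w (P := C) (ModuleCat.ofHom φ) _⟩
  map_add' a b := by
    apply Subtype.ext
    apply ModuleCat.hom_ext
    rfl
  map_smul' r b := by
    apply Subtype.ext
    apply ModuleCat.hom_ext
    rfl

theorem homToCycles_surj (h : SESX R f.hom g.hom) (hP : Module.Projective R P)
    (C : ModuleCat.{u} R) : Function.Surjective (homToCycles f g h hP C) := by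
  rintro ⟨ψ, hψ⟩
  let Q := ProjectiveResolution.of K
  let ψ' : Q.complex.X 0 ⟶ C := ψ
  have hψ' : Q.complex.d 1 0 ≫ ψ' = 0 := hψ
  obtain ⟨φ, hφ⟩ := exists_factor (resAug Q).hom (resAug_surj Q) ψ'.hom (by
    intro x hx
    obtain ⟨y, rfl⟩ := resAug_exact Q x hx
    exact congrArg (fun φ => φ.hom y) hψ')
  refine ⟨φ, ?_⟩
  apply Subtype.ext
  apply ModuleCat.hom_ext
  apply LinearMap.ext
  intro x
  exact hφ x

theorem homToCycles_inj (h : SESX R f.hom g.hom) (hP : Module.Projective R P)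
    (C : ModuleCat.{u} R) : Function.Injective (homToCycles f g h hP C) := by
  intro a b hab
  let Q := ProjectiveResolution.of K
  have : resAug Q ≫ ModuleCat.ofHom a = resAug Q ≫ ModuleCat.ofHom b := congrArg Subtype.val hab
  apply LinearMap.ext
  intro x
  obtain ⟨y, rfl⟩ := resAug_surj Q x
  exact congrArg (fun φ => φ.hom y) this

theorem ext_one' (h : SESX R f.hom g.hom) (hP : Module.Projective R P) (C : ModuleCat.{u} R) :
    Nonempty (ExtM R M C 1 ≃ₗ[R]
      ((K →ₗ[R] C) ⧸ LinearMap.range (LinearMap.lcomp R C f.hom))) := by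
  let Q := ProjectiveResolution.of K
  let Q' := spliceRes f g h hP Q
  let S := (Q'.complex.linearYonedaObj R C).sc' 0 1 2
  let e1 := (Q'.isoExt 1 C ≪≫ linScIso _ C 0 ≪≫ S.moduleCatHomologyIso).toLinearEquiv
  let e2 : (K →ₗ[R] C) ≃ₗ[R] LinearMap.ker S.g.hom :=
    LinearEquiv.ofBijective (homToCycles f g h hP C)
      ⟨homToCycles_inj f g h hP C, homToCycles_surj f g h hP C⟩
  refine ⟨e1.trans (Submodule.Quotient.equiv _ _ e2 ?_).symm⟩
  ext y
  constructor
  · rintro ⟨φ, ⟨ρ, rfl⟩, rfl⟩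
    exact ⟨ModuleCat.ofHom ρ, rfl⟩
  · rintro ⟨ρ, rfl⟩
    let ρ' : P ⟶ C := ρ
    exact ⟨ρ'.hom ∘ₗ f.hom, ⟨ρ'.hom, rfl⟩, rfl⟩

end ExtCompute


section AbExt
open Abelian
variable {S : ShortComplex (ModuleCat.{u} R)} (hS : S.ShortExact) (C : ModuleCat.{u} R)

include hS

theorem ab_mid (i : ℕ) (h1 : Subsingleton (Abelian.Ext.{u} S.X₁ C i))
    (h3 : Subsingleton (Abelian.Ext.{u} S.X₃ C i)) : Subsingleton (Abelian.Ext.{u} S.X₂ C i) := by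
  refine subsingleton_of_forall_eq 0 fun x => ?_
  obtain ⟨y, rfl⟩ := Ext.contravariant_sequence_exact₂ hS C x (Subsingleton.elim _ _)
  rw [Subsingleton.elim y 0, Ext.comp_zero]

theorem ab_left (i : ℕ) (h2 : Subsingleton (Abelian.Ext.{u} S.X₂ C i))
    (h3 : Subsingleton (Abelian.Ext.{u} S.X₃ C (i + 1))) :
    Subsingleton (Abelian.Ext.{u} S.X₁ C i) := by
  refine subsingleton_of_forall_eq 0 fun x => ?_
  obtain ⟨y, rfl⟩ := Ext.contravariant_sequence_exact₁ hS C x (add_comm 1 i) (Subsingleton.elim _ _)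
  rw [Subsingleton.elim y 0, Ext.comp_zero]

theorem ab_right (i : ℕ) (h1 : Subsingleton (Abelian.Ext.{u} S.X₁ C i))
    (h2 : Subsingleton (Abelian.Ext.{u} S.X₂ C (i + 1))) :
    Subsingleton (Abelian.Ext.{u} S.X₃ C (i + 1)) := by
  refine subsingleton_of_forall_eq 0 fun x => ?_
  obtain ⟨y, rfl⟩ := Ext.contravariant_sequence_exact₃ hS C x (Subsingleton.elim _ _) (add_comm 1 i)
  rw [Subsingleton.elim y 0, Ext.comp_zero]

theorem ab_extend (h3 : Subsingleton (Abelian.Ext.{u} S.X₃ C 1)) (φ : S.X₁ ⟶ C) :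
    ∃ ψ : S.X₂ ⟶ C, S.f ≫ ψ = φ := by
  obtain ⟨y, hy⟩ := Ext.contravariant_sequence_exact₁ hS C (Ext.mk₀ φ) (add_comm 1 0)
    (Subsingleton.elim _ _)
  obtain ⟨ψ, rfl⟩ := (Ext.mk₀_bijective _ _).2 y
  refine ⟨ψ, ?_⟩
  rw [Ext.mk₀_comp_mk₀] at hy
  exact (Ext.mk₀_bijective _ _).1 hy

theorem ab_one (h2 : Subsingleton (Abelian.Ext.{u} S.X₂ C 1))
    (h : ∀ φ : S.X₁ ⟶ C, ∃ ψ : S.X₂ ⟶ C, S.f ≫ ψ = φ) :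
    Subsingleton (Abelian.Ext.{u} S.X₃ C 1) := by
  refine subsingleton_of_forall_eq 0 fun x => ?_
  obtain ⟨y, rfl⟩ := Ext.contravariant_sequence_exact₃ hS C x (Subsingleton.elim _ _) (add_comm 1 0)
  obtain ⟨φ, rfl⟩ := (Ext.mk₀_bijective _ _).2 y
  obtain ⟨ψ, rfl⟩ := h φ
  rw [← Ext.mk₀_comp_mk₀, ← Ext.comp_assoc (hS.extClass) (Ext.mk₀ S.f) (Ext.mk₀ ψ) (add_zero 1)
    (add_zero 0) (by omega)]
  simp

end AbExt

theorem SESX.shortExact {A B D : ModuleCat.{u} R} {f : A →ₗ[R] B} {g : B →ₗ[R] D}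
    (h : SESX R f g) : (ShortComplex.mk (ModuleCat.ofHom f) (ModuleCat.ofHom g)
      (by ext x; exact h.exact.apply_apply_eq_zero x)).ShortExact :=
  ModuleCat.shortComplex_shortExact _ h.exact h.inj h.surj

theorem ext_shift {K P M : ModuleCat.{u} R} {f : K →ₗ[R] P} {g : P →ₗ[R] M}
    (h : SESX R f g) (hP : Module.Projective R P) (C : ModuleCat.{u} R)
    (i : ℕ) : Nonempty (ExtM R M C (i + 2) ≃ₗ[R] ExtM R K C (i + 1)) :=
  ⟨(ext_shift' (ModuleCat.ofHom f) (ModuleCat.ofHom g) h hP C i).some.toLinearEquiv⟩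

theorem ext_one {K P M : ModuleCat.{u} R} {f : K →ₗ[R] P} {g : P →ₗ[R] M}
    (h : SESX R f g) (hP : Module.Projective R P) (C : ModuleCat.{u} R) :
    Nonempty (ExtM R M C 1 ≃ₗ[R]
      ((K →ₗ[R] C) ⧸ LinearMap.range (LinearMap.lcomp R C f))) :=
  ext_one' (ModuleCat.ofHom f) (ModuleCat.ofHom g) h hP C

theorem ext_one_subsingleton {K P M : ModuleCat.{u} R} {f : K →ₗ[R] P} {g : P →ₗ[R] M}
    (h : SESX R f g) (hP : Module.Projective R P) (C : ModuleCat.{u} R) :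
    Subsingleton (ExtM R M C 1) ↔ ∀ φ : K →ₗ[R] C, ∃ ψ : P →ₗ[R] C, ψ ∘ₗ f = φ := by
  obtain ⟨e⟩ := ext_one h hP C
  rw [e.toEquiv.subsingleton_congr, Submodule.Quotient.subsingleton_iff,
    LinearMap.range_eq_top]
  rfl

theorem exists_proj (M : ModuleCat.{u} R) : ∃ (K P : ModuleCat.{u} R) (f : K →ₗ[R] P)
    (g : P →ₗ[R] M), SESX R f g ∧ Module.Projective R P := by
  have h := M.shortExact_projectiveShortComplex
  refine ⟨_, _, M.projectiveShortComplex.f.hom, M.projectiveShortComplex.g.hom,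
    ⟨h.moduleCat_injective_f, h.moduleCat_surjective_g, ?_⟩, inferInstance⟩
  exact (ShortComplex.ShortExact.moduleCat_exact_iff_function_exact _).1 h.exact

theorem ext_comp (C : ModuleCat.{u} R) (i : ℕ) : ∀ (M : ModuleCat.{u} R),
    Subsingleton (ExtM R M C (i + 1)) ↔ Subsingleton (Abelian.Ext.{u} M C (i + 1)) := by
  induction i with
  | zero =>
    intro M
    obtain ⟨K, P, f, g, h, hP⟩ := exists_proj M
    have : Projective P := (IsProjective.iff_projective P).1 hP
    rw [zero_add, ext_one_subsingleton h hP]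
    constructor
    · intro H
      apply ab_one h.shortExact C (Abelian.Ext.subsingleton_of_projective _ _ 0)
      intro φ
      obtain ⟨ψ, hψ⟩ := H φ.hom
      exact ⟨ModuleCat.ofHom ψ, ModuleCat.hom_ext hψ⟩
    · intro H φ
      obtain ⟨ψ, hψ⟩ := ab_extend h.shortExact C H (ModuleCat.ofHom φ)
      exact ⟨ψ.hom, congrArg ModuleCat.Hom.hom hψ⟩
  | succ i ih =>
    intro M
    obtain ⟨K, P, f, g, h, hP⟩ := exists_proj M
    have : Projective P := (IsProjective.iff_projective P).1 hP
    obtain ⟨e⟩ := ext_shift h hP C i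
    rw [e.toEquiv.subsingleton_congr, ih]
    constructor
    · intro H
      exact ab_right h.shortExact C (i + 1) H (Abelian.Ext.subsingleton_of_projective _ _ _)
    · intro H
      exact ab_left h.shortExact C (i + 1) (Abelian.Ext.subsingleton_of_projective _ _ _) H

section LES
variable {A B D : ModuleCat.{u} R} {f : A →ₗ[R] B} {g : B →ₗ[R] D}
    (h : SESX R f g) (C : ModuleCat.{u} R)
include h

theorem ev_mid {i : ℕ} (hi : 0 < i) (h1 : Subsingleton (ExtM R A C i))
    (h3 : Subsingleton (ExtM R D C i)) : Subsingleton (ExtM R B C i) := by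
  obtain ⟨i, rfl⟩ := Nat.exists_eq_succ_of_ne_zero hi.ne'
  rw [ext_comp] at *
  exact ab_mid h.shortExact C _ h1 h3

theorem ev_left {i : ℕ} (hi : 0 < i) (h1 : Subsingleton (ExtM R B C i))
    (h3 : Subsingleton (ExtM R D C (i + 1))) : Subsingleton (ExtM R A C i) := by
  obtain ⟨i, rfl⟩ := Nat.exists_eq_succ_of_ne_zero hi.ne'
  rw [ext_comp] at *
  exact ab_left h.shortExact C _ h1 h3

theorem ev_right {i : ℕ} (hi : 0 < i) (h1 : Subsingleton (ExtM R A C i))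
    (h3 : Subsingleton (ExtM R B C (i + 1))) : Subsingleton (ExtM R D C (i + 1)) := by
  obtain ⟨i, rfl⟩ := Nat.exists_eq_succ_of_ne_zero hi.ne'
  rw [ext_comp] at *
  exact ab_right h.shortExact C _ h1 h3

theorem ev_extend (h3 : Subsingleton (ExtM R D C 1)) (φ : A →ₗ[R] C) :
    ∃ ψ : B →ₗ[R] C, ψ ∘ₗ f = φ := by
  obtain ⟨ψ, hψ⟩ := ab_extend h.shortExact C ((ext_comp C 0 _).1 h3) (ModuleCat.ofHom φ)
  exact ⟨ψ.hom, congrArg ModuleCat.Hom.hom hψ⟩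

theorem ev_one (h2 : Subsingleton (ExtM R B C 1))
    (H : ∀ φ : A →ₗ[R] C, ∃ ψ : B →ₗ[R] C, ψ ∘ₗ f = φ) : Subsingleton (ExtM R D C 1) := by
  refine (ext_comp C 0 _).2 ?_
  apply ab_one h.shortExact C ((ext_comp C 0 _).1 h2)
  intro φ
  obtain ⟨ψ, hψ⟩ := H φ.hom
  exact ⟨ModuleCat.ofHom ψ, ModuleCat.hom_ext hψ⟩

end LES

theorem ev_proj (P C : ModuleCat.{u} R) (hP : Module.Projective R P) {i : ℕ} (hi : 0 < i) :
    Subsingleton (ExtM R P C i) := by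
  obtain ⟨i, rfl⟩ := Nat.exists_eq_succ_of_ne_zero hi.ne'
  have : Projective P := (IsProjective.iff_projective P).1 hP
  rw [ext_comp]
  exact Abelian.Ext.subsingleton_of_projective _ _ _

theorem ev_congr {M N : ModuleCat.{u} R} (e : M ≃ₗ[R] N) (C : ModuleCat.{u} R) (i : ℕ) :
    Subsingleton (ExtM R M C i) ↔ Subsingleton (ExtM R N C i) := by
  have e' : ExtM R M C i ≅ ExtM R N C i :=
    ((_root_.Ext R (ModuleCat.{u} R) i).mapIso e.toModuleIso.symm.op).app C
  exact e'.toLinearEquiv.toEquiv.subsingleton_congr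


set_option linter.unusedSectionVars false

section Chase
variable {A B D A' B' D' : Type u} [AddCommGroup A] [AddCommGroup B] [AddCommGroup D]
  [AddCommGroup A'] [AddCommGroup B'] [AddCommGroup D']
  [Module R A] [Module R B] [Module R D] [Module R A'] [Module R B'] [Module R D']
  {f : A →ₗ[R] B} {g : B →ₗ[R] D} {f' : A' →ₗ[R] B'} {g' : B' →ₗ[R] D'}
  (h : SESX R f g) (h' : SESX R f' g')
  (a : A →ₗ[R] A') (b : B →ₗ[R] B') (d : D →ₗ[R] D')
  (w1 : ∀ x, b (f x) = f' (a x)) (w2 : ∀ x, d (g x) = g' (b x))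
include h h' w1 w2

theorem chase_mid (ha : Function.Bijective a) (hd : Function.Bijective d) :
    Function.Bijective b := by
  constructor
  · rw [injective_iff_map_eq_zero]
    intro x hx
    have h1 : g x = 0 := hd.1 (by rw [w2, hx, map_zero, map_zero])
    obtain ⟨y, rfl⟩ := (h.exact x).1 h1
    rw [w1] at hx
    have : a y = 0 := h'.inj (by rw [hx, map_zero])
    have : y = 0 := ha.1 (by rw [this, map_zero])
    rw [this, map_zero]
  · intro y
    obtain ⟨z, hz⟩ := hd.2 (g' y)
    obtain ⟨x, rfl⟩ := h.surj z
    have : g' (y - b x) = 0 := by rw [map_sub, ← w2, hz, sub_self]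
    obtain ⟨t, ht⟩ := (h'.exact _).1 this
    obtain ⟨s, rfl⟩ := ha.2 t
    refine ⟨f s + x, ?_⟩
    rw [map_add, w1, ht, sub_add_cancel]

theorem chase_left (hb : Function.Bijective b) (hd : Function.Bijective d) :
    Function.Bijective a := by
  constructor
  · rw [injective_iff_map_eq_zero]
    intro x hx
    apply h.inj
    apply hb.1
    rw [w1, hx]; simp
  · intro y
    obtain ⟨x, hx⟩ := hb.2 (f' y)
    have : g x = 0 := hd.1 (by rw [w2, hx, h'.exact.apply_apply_eq_zero, map_zero])
    obtain ⟨z, rfl⟩ := (h.exact x).1 this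
    refine ⟨z, h'.inj ?_⟩
    rw [← w1, hx]

theorem chase_right (ha : Function.Bijective a) (hb : Function.Bijective b) :
    Function.Bijective d := by
  constructor
  · rw [injective_iff_map_eq_zero]
    intro x hx
    obtain ⟨y, rfl⟩ := h.surj x
    rw [w2] at hx
    obtain ⟨t, ht⟩ := (h'.exact _).1 hx
    obtain ⟨s, rfl⟩ := ha.2 t
    rw [← w1] at ht
    rw [← hb.1 ht, h.exact.apply_apply_eq_zero]
  · intro y
    obtain ⟨z, rfl⟩ := h'.surj y
    obtain ⟨x, rfl⟩ := hb.2 z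
    exact ⟨g x, w2 x⟩
end Chase

theorem exists_lift_inj {X A B : Type*} [AddCommGroup X] [AddCommGroup A] [AddCommGroup B]
    [Module R X] [Module R A] [Module R B] (f : A →ₗ[R] B) (hf : Function.Injective f)
    (φ : X →ₗ[R] B) (hφ : ∀ x, ∃ a, f a = φ x) : ∃ ψ : X →ₗ[R] A, ∀ x, f (ψ x) = φ x := by
  choose ψ hψ using hφ
  refine ⟨{ toFun := ψ, map_add' := fun x y => hf ?_, map_smul' := fun r x => hf ?_ }, hψ⟩
  · simp [hψ]
  · simp [hψ]

theorem dual_left_exact {A B D : Type u} [AddCommGroup A] [AddCommGroup B] [AddCommGroup D]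
    [Module R A] [Module R B] [Module R D] {f : A →ₗ[R] B} {g : B →ₗ[R] D}
    (hs : Function.Surjective g) (he : Function.Exact f g) (C : ModuleCat.{u} R) :
    Function.Injective (LinearMap.lcomp R C g) ∧
      Function.Exact (LinearMap.lcomp R C g) (LinearMap.lcomp R C f) := by
  constructor
  · intro a b hab
    ext x
    obtain ⟨y, rfl⟩ := hs x
    exact congrArg (fun φ : B →ₗ[R] C => φ y) hab
  · intro φ
    constructor
    · intro hφ
      obtain ⟨ψ, hψ⟩ := exists_factor g hs φ (by
        intro x hx
        obtain ⟨y, rfl⟩ := (he x).1 hx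
        exact congrArg (fun φ : A →ₗ[R] C => φ y) hφ)
      exact ⟨ψ, LinearMap.ext hψ⟩
    · rintro ⟨ψ, rfl⟩
      ext x
      show ψ (g (f x)) = 0
      rw [he.apply_apply_eq_zero, map_zero]

section TR
variable (C : ModuleCat.{u} R)

/-- The `C`-dual. -/
abbrev dl (M : ModuleCat.{u} R) : ModuleCat.{u} R := ModuleCat.of R (M →ₗ[R] C)

variable {C}

theorem ses_dual {A B D : ModuleCat.{u} R} {f : A →ₗ[R] B} {g : B →ₗ[R] D}
    (h : SESX R f g) (hD : Subsingleton (ExtM R D C 1)) :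
    SESX R (A := dl C D) (B := dl C B) (D := dl C A)
      (LinearMap.lcomp R C g) (LinearMap.lcomp R C f) where
  inj := (dual_left_exact h.surj h.exact C).1
  exact := (dual_left_exact h.surj h.exact C).2
  surj := fun φ => ev_extend h C hD φ

theorem ses_ddual {A B D : ModuleCat.{u} R} {f : A →ₗ[R] B} {g : B →ₗ[R] D}
    (h : SESX R f g) (hD : Subsingleton (ExtM R D C 1)) (hA : Subsingleton (ExtM R (dl C A) C 1)) :
    SESX R (A := dl C (dl C A)) (B := dl C (dl C B)) (D := dl C (dl C D))
      (LinearMap.lcomp R C (LinearMap.lcomp R C f))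
      (LinearMap.lcomp R C (LinearMap.lcomp R C g)) :=
  ses_dual (ses_dual h hD) hA

theorem finite_hom [IsNoetherianRing R] (M N : Type u) [AddCommGroup M] [Module R M]
    [AddCommGroup N] [Module R N] [Module.Finite R M] [Module.Finite R N] :
    Module.Finite R (M →ₗ[R] N) := by
  infer_instance

variable [IsNoetherianRing R] (hC : IsSemidualizing R C)

theorem tr_congr {M N : ModuleCat.{u} R} (e : M ≃ₗ[R] N) (h : IsTotallyCReflexive R C M) :
    IsTotallyCReflexive R C N := by
  obtain ⟨h1, h2, h3, h4⟩ := h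
  have e' : dl C M ≃ₗ[R] dl C N := e.congrLeft C R
  refine ⟨Module.Finite.equiv e, ?_, fun i hi => (ev_congr e C i).1 (h3 i hi),
    fun i hi => (ev_congr e' C i).1 (h4 i hi)⟩
  have : bidualityMap R C N = ((e.congrLeft C R).congrLeft C R).toLinearMap ∘ₗ
      bidualityMap R C M ∘ₗ e.symm.toLinearMap := by
    ext x φ
    simp [bidualityMap, LinearEquiv.congrLeft]
  rw [this]
  exact (((e.congrLeft C R).congrLeft C R).bijective.comp h2).comp e.symm.bijective

include hC in
theorem tr_dual {M : ModuleCat.{u} R} (h : IsTotallyCReflexive R C M) :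
    IsTotallyCReflexive R C (dl C M) := by
  obtain ⟨h1, h2, h3, h4⟩ := h
  have := hC.1
  have e : M ≃ₗ[R] dl C (dl C M) := LinearEquiv.ofBijective (bidualityMap R C M) h2
  refine ⟨finite_hom M C, ?_, h4, fun i hi => (ev_congr e C i).1 (h3 i hi)⟩
  have hl : Function.Bijective (LinearMap.lcomp R C (bidualityMap R C M)) :=
    ((LinearEquiv.ofBijective (bidualityMap R C M) h2).congrLeft C R).symm.bijective
  refine (Function.Bijective.of_comp_iff' hl _).1 ?_
  have : (LinearMap.lcomp R C (bidualityMap R C M)) ∘ (bidualityMap R C (dl C M)) = id := by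
    funext φ
    rfl
  rw [this]; exact Function.bijective_id

section
variable {A B D : ModuleCat.{u} R} {f : A →ₗ[R] B} {g : B →ₗ[R] D}
    (h : SESX R f g)
include h

theorem tr_mid (hA : IsTotallyCReflexive R C A) (hD : IsTotallyCReflexive R C D) :
    IsTotallyCReflexive R C B := by
  obtain ⟨a1, a2, a3, a4⟩ := hA
  obtain ⟨d1, d2, d3, d4⟩ := hD
  have h' := ses_dual h (d3 1 one_pos)
  have h'' := ses_ddual h (d3 1 one_pos) (a4 1 one_pos)
  refine ⟨?_, ?_, fun i hi => ev_mid h C hi (a3 i hi) (d3 i hi),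
    fun i hi => ev_mid h' C hi (d4 i hi) (a4 i hi)⟩
  · exact Module.Finite.of_exact h.exact h.surj
  · exact chase_mid h h'' (bidualityMap R C A) (bidualityMap R C B) (bidualityMap R C D)
      (fun _ => rfl) (fun _ => rfl) a2 d2

theorem tr_left (hB : IsTotallyCReflexive R C B) (hD : IsTotallyCReflexive R C D) :
    IsTotallyCReflexive R C A := by
  obtain ⟨b1, b2, b3, b4⟩ := hB
  obtain ⟨d1, d2, d3, d4⟩ := hD
  have h' := ses_dual h (d3 1 one_pos)
  have a4 : ∀ i : ℕ, 0 < i → Subsingleton (ExtM R (dl C A) C i) := by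
    intro i hi
    obtain ⟨i, rfl⟩ := Nat.exists_eq_succ_of_ne_zero hi.ne'
    match i with
    | 0 =>
      refine ev_one (A := dl C D) (B := dl C B) (D := dl C A) h' C (b4 1 one_pos) fun φ => ?_
      obtain ⟨d, rfl⟩ := d2.2 φ
      obtain ⟨b, rfl⟩ := h.surj d
      exact ⟨bidualityMap R C B b, rfl⟩
    | i + 1 => exact ev_right h' C (Nat.succ_pos i) (d4 _ (Nat.succ_pos i)) (b4 _ hi)
  have h'' := ses_ddual h (d3 1 one_pos) (a4 1 one_pos)
  refine ⟨?_, ?_, fun i hi => ev_left h C hi (b3 i hi) (d3 _ (Nat.succ_pos i)), a4⟩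
  · exact Module.Finite.of_injective f h.inj
  · exact chase_left h h'' (bidualityMap R C A) (bidualityMap R C B) (bidualityMap R C D)
      (fun _ => rfl) (fun _ => rfl) b2 d2

include hC in
theorem tr_right (hA : IsTotallyCReflexive R C A) (hB : IsTotallyCReflexive R C B)
    (hD : Subsingleton (ExtM R D C 1)) : IsTotallyCReflexive R C D := by
  have h' := ses_dual h hD
  have hD' : IsTotallyCReflexive R C (dl C D) := tr_left h' (tr_dual hC hB) (tr_dual hC hA)
  obtain ⟨a1, a2, a3, a4⟩ := hA
  obtain ⟨b1, b2, b3, b4⟩ := hB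
  have h'' := ses_ddual h hD (a4 1 one_pos)
  refine ⟨Module.Finite.of_surjective g h.surj, ?_, ?_, hD'.2.2.1⟩
  · exact chase_right h h'' (bidualityMap R C A) (bidualityMap R C B) (bidualityMap R C D)
      (fun _ => rfl) (fun _ => rfl) a2 b2
  · intro i hi
    obtain ⟨i, rfl⟩ := Nat.exists_eq_succ_of_ne_zero hi.ne'
    match i with
    | 0 => exact hD
    | i + 1 => exact ev_right h C (Nat.succ_pos i) (a3 _ (Nat.succ_pos i)) (b3 _ hi)
end

theorem tr_zero {M : ModuleCat.{u} R} (hM : Subsingleton M) : IsTotallyCReflexive R C M := by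
  have h1 : Subsingleton (M →ₗ[R] C) := inferInstance
  refine ⟨inferInstance, ⟨fun _ _ _ => Subsingleton.elim _ _, fun y => ⟨0, Subsingleton.elim _ _⟩⟩,
    fun i hi => ev_proj _ _ ?_ hi, fun i hi => ev_proj _ _ ?_ hi⟩
  · infer_instance
  · show Module.Projective R (M →ₗ[R] C)
    infer_instance

include hC in
theorem tr_self : IsTotallyCReflexive R C (ModuleCat.of R R) := by
  have e : dl C (ModuleCat.of R R) ≃ₗ[R] C := LinearMap.ringLmapEquivSelf R R C
  refine ⟨inferInstanceAs (Module.Finite R R), ?_, fun i hi => ev_proj _ _ ?_ hi,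
    fun i hi => (ev_congr e C i).2 (hC.2.2 i hi)⟩
  · have h2 := hC.2.1
    have hb := ((LinearMap.ringLmapEquivSelf R R C).congrLeft (C : Type u) R).bijective
    refine (Function.Bijective.of_comp_iff' hb _).1 ?_
    convert h2 using 1
    funext r
    ext c
    simp [bidualityMap, LinearEquiv.congrLeft]
  · exact inferInstanceAs (Module.Projective R R)

theorem ses_fin (n : ℕ) : SESX R (A := R) (B := Fin (n + 1) → R) (D := Fin n → R)
    (LinearMap.single R (fun _ => R) 0) (LinearMap.funLeft R R Fin.succ) := by
  refine ⟨?_, ?_, ?_⟩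
  · intro a b hab
    have := congrFun hab 0
    simpa using this
  · exact LinearMap.funLeft_surjective_of_injective R R _ (Fin.succ_injective n)
  · intro x
    constructor
    · intro hx
      refine ⟨x 0, ?_⟩
      funext i
      refine Fin.cases ?_ (fun j => ?_) i
      · simp
      · have := congrFun hx j
        simpa using this.symm
    · rintro ⟨r, rfl⟩
      funext j
      simp [LinearMap.funLeft_apply]

include hC in
theorem tr_fin (n : ℕ) : IsTotallyCReflexive R C (ModuleCat.of R (Fin n → R)) := by
  induction n with
  | zero => exact tr_zero (inferInstanceAs (Subsingleton (Fin 0 → R)))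
  | succ n ih =>
    refine tr_mid (A := ModuleCat.of R R) (B := ModuleCat.of R (Fin (n + 1) → R))
      (D := ModuleCat.of R (Fin n → R))
      (f := LinearMap.single R (fun _ => R) 0) (g := LinearMap.funLeft R R Fin.succ) ?_
      (tr_self hC) ih
    exact ses_fin n

theorem ev_retract {M N : ModuleCat.{u} R} (i : M →ₗ[R] N) (p : N →ₗ[R] M)
    (hip : ∀ x, p (i x) = x) (C : ModuleCat.{u} R) (k : ℕ) (h : Subsingleton (ExtM R N C k)) :
    Subsingleton (ExtM R M C k) := by
  let F := (_root_.Ext R (ModuleCat.{u} R) k).flip.obj C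
  have hid : ModuleCat.ofHom i ≫ ModuleCat.ofHom p = 𝟙 M := by
    ext x; exact hip x
  have hF : F.map (ModuleCat.ofHom p).op ≫ F.map (ModuleCat.ofHom i).op = 𝟙 _ := by
    rw [← F.map_comp, ← op_comp, hid, op_id, F.map_id]
  have hinj : Function.Injective (F.map (ModuleCat.ofHom p).op).hom := by
    apply Function.LeftInverse.injective (g := (F.map (ModuleCat.ofHom i).op).hom)
    intro x
    exact congrArg (fun φ => φ.hom x) hF
  exact Function.Injective.subsingleton (β := ExtM R N C k) hinj

theorem tr_retract_s3 {M N : ModuleCat.{u} R} (i : M →ₗ[R] N) (p : N →ₗ[R] M)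
    (hip : ∀ x, p (i x) = x) (h : IsTotallyCReflexive R C N) : IsTotallyCReflexive R C M := by
  obtain ⟨h1, h2, h3, h4⟩ := h
  refine ⟨Module.Finite.of_surjective p fun x => ⟨i x, hip x⟩, ⟨?_, ?_⟩,
    fun k hk => ev_retract i p hip C k (h3 k hk), fun k hk => ev_retract (M := dl C M) (N := dl C N)
    (LinearMap.lcomp R C p) (LinearMap.lcomp R C i) (fun φ => ?_) C k (h4 k hk)⟩
  · intro x y hxy
    have : bidualityMap R C N (i x) = bidualityMap R C N (i y) := by
      ext φ
      exact congrArg (fun ψ : (M →ₗ[R] C) →ₗ[R] C => ψ (φ ∘ₗ i)) hxy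
    rw [← hip x, ← hip y, h2.1 this]
  · intro ξ
    obtain ⟨y, hy⟩ := h2.2 (ξ ∘ₗ LinearMap.lcomp R C i)
    refine ⟨p y, ?_⟩
    ext φ
    have := congrArg (fun ψ : (N →ₗ[R] C) →ₗ[R] C => ψ (φ ∘ₗ p)) hy
    refine this.trans ?_
    show ξ ((φ ∘ₗ p) ∘ₗ i) = ξ φ
    congr 1
    ext x
    exact congrArg φ (hip x)
  · refine LinearMap.ext fun x => ?_
    exact congrArg φ (hip x)

include hC in
theorem tr_proj_s3 {P : ModuleCat.{u} R} (hf : Module.Finite R P) (hP : Module.Projective R P) :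
    IsTotallyCReflexive R C P := by
  obtain ⟨n, p, hp⟩ := Module.Finite.exists_fin' R P
  obtain ⟨i, hi⟩ := Module.projective_lifting_property p LinearMap.id hp
  exact tr_retract_s3 (N := ModuleCat.of R (Fin n → R)) i p (fun x => congrArg (fun φ : P →ₗ[R] P => φ x) hi) (tr_fin hC n)

end TR


section GD
variable {C : ModuleCat.{u} R}

theorem gd_succ_iff (n : ℕ) (M : ModuleCat.{u} R) : gcdimLE R C (n + 1) M ↔
    ∃ (X K : ModuleCat.{u} R) (f : K →ₗ[R] X) (g : X →ₗ[R] M), SESX R f g ∧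
      IsTotallyCReflexive R C X ∧ gcdimLE R C n K := by
  constructor
  · rintro ⟨X, K, f, g, h1, h2, h3, h4, h5⟩
    exact ⟨X, K, f, g, ⟨h1, h2, LinearMap.exact_iff.2 h3⟩, h4, h5⟩
  · rintro ⟨X, K, f, g, h, h4, h5⟩
    exact ⟨X, K, f, g, h.inj, h.surj, LinearMap.exact_iff.1 h.exact, h4, h5⟩

/-- the kernel sequence of a surjection -/
theorem ses_ker_s3 {X Y : Type u} [AddCommGroup X] [AddCommGroup Y] [Module R X] [Module R Y]
    (g : X →ₗ[R] Y) (hg : Function.Surjective g) :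
    SESX R (LinearMap.ker g).subtype g :=
  ⟨Subtype.val_injective, hg, LinearMap.exact_subtype_ker_map g⟩

theorem exists_fin_proj [IsNoetherianRing R] (M : ModuleCat.{u} R) (hM : Module.Finite R M) :
    ∃ (K P : ModuleCat.{u} R)
    (f : K →ₗ[R] P) (g : P →ₗ[R] M), SESX R f g ∧ Module.Finite R P ∧ Module.Projective R P := by
  obtain ⟨n, p, hp⟩ := Module.Finite.exists_fin' R M
  exact ⟨ModuleCat.of R (LinearMap.ker p), ModuleCat.of R (Fin n → R), (LinearMap.ker p).subtype, p,
    ses_ker_s3 p hp, inferInstanceAs (Module.Finite R (Fin n → R)),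
    inferInstanceAs (Module.Projective R (Fin n → R))⟩

variable [IsNoetherianRing R]

theorem gd_congr {n : ℕ} {M N : ModuleCat.{u} R} (e : M ≃ₗ[R] N) (h : gcdimLE R C n M) :
    gcdimLE R C n N := by
  match n with
  | 0 => exact tr_congr e h
  | n + 1 =>
    rw [gd_succ_iff] at h ⊢
    obtain ⟨X, K, f, g, h1, h2, h3⟩ := h
    refine ⟨X, K, f, e.toLinearMap ∘ₗ g, ⟨h1.inj, e.surjective.comp h1.surj, ?_⟩, h2, h3⟩
    intro x
    rw [← h1.exact x]
    simp

theorem gd_congr_iff {n : ℕ} {M N : ModuleCat.{u} R} (e : M ≃ₗ[R] N) :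
    gcdimLE R C n M ↔ gcdimLE R C n N := ⟨gd_congr e, gd_congr e.symm⟩

theorem gd_mono_succ {n : ℕ} : ∀ {M : ModuleCat.{u} R}, gcdimLE R C n M →
    gcdimLE R C (n + 1) M := by
  induction n with
  | zero =>
    intro M h
    rw [gd_succ_iff]
    refine ⟨M, ModuleCat.of R PUnit, 0, LinearMap.id, ⟨fun _ _ _ => Subsingleton.elim (α := PUnit) _ _,
      Function.surjective_id, ?_⟩, h, tr_zero (inferInstanceAs (Subsingleton PUnit))⟩
    intro x
    constructor
    · intro hx
      exact ⟨0, hx.symm⟩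
    · rintro ⟨y, rfl⟩
      rfl
  | succ n ih =>
    intro M h
    rw [gd_succ_iff] at h ⊢
    obtain ⟨X, K, f, g, h1, h2, h3⟩ := h
    exact ⟨X, K, f, g, h1, h2, ih h3⟩

theorem gd_mono {n m : ℕ} (hnm : n ≤ m) {M : ModuleCat.{u} R} (h : gcdimLE R C n M) :
    gcdimLE R C m M := by
  induction hnm with
  | refl => exact h
  | step _ ih => exact gd_mono_succ ih

theorem ses_prod_s3 (X Y : Type u) [AddCommGroup X] [AddCommGroup Y] [Module R X] [Module R Y] :
    SESX R (LinearMap.inl R X Y) (LinearMap.snd R X Y) := by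
  refine ⟨LinearMap.inl_injective, LinearMap.snd_surjective, ?_⟩
  exact Function.Exact.inl_snd

theorem gd_left {n : ℕ} {A B D : ModuleCat.{u} R} {f : A →ₗ[R] B} {g : B →ₗ[R] D}
    (h : SESX R f g) (hD : IsTotallyCReflexive R C D) (hB : gcdimLE R C n B) :
    gcdimLE R C n A := by
  match n with
  | 0 => exact tr_left h hB hD
  | n + 1 =>
    rw [gd_succ_iff] at hB ⊢
    obtain ⟨X, B', b, x, h1, h2, h3⟩ := hB
    have hs : Function.Surjective (g ∘ₗ x) := h.surj.comp h1.surj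
    let A' : ModuleCat.{u} R := ModuleCat.of R (LinearMap.ker (g ∘ₗ x))
    have hA' : IsTotallyCReflexive R C A' :=
      tr_left (A := A') (f := (LinearMap.ker (g ∘ₗ x)).subtype) (ses_ker_s3 (g ∘ₗ x) hs) h2 hD
    obtain ⟨y, hy⟩ := exists_lift_inj f h.inj (x ∘ₗ (LinearMap.ker (g ∘ₗ x)).subtype)
      (fun z => (h.exact _).1 z.2)
    refine ⟨A', B', LinearMap.codRestrict _ b (fun t => ?_), y, ⟨?_, ?_, ?_⟩, hA', h3⟩
    · show g (x (b t)) = 0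
      rw [h1.exact.apply_apply_eq_zero, map_zero]
    · intro s t hst
      exact h1.inj (congrArg Subtype.val hst)
    · intro a
      obtain ⟨z, hz⟩ := h1.surj (f a)
      refine ⟨⟨z, ?_⟩, h.inj ?_⟩
      · show g (x z) = 0
        rw [hz, h.exact.apply_apply_eq_zero]
      · rw [hy]; exact hz
    · intro z
      have e : y z = 0 ↔ x z.1 = 0 := by
        rw [← map_eq_zero_iff f h.inj, hy]; rfl
      rw [e, h1.exact z.1]
      constructor
      · rintro ⟨t, ht⟩
        exact ⟨t, Subtype.ext ht⟩
      · rintro ⟨t, ht⟩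
        exact ⟨t, congrArg Subtype.val ht⟩

variable (hC : IsSemidualizing R C)
include hC

theorem gd_mid {n : ℕ} : ∀ {A B D : ModuleCat.{u} R} {f : A →ₗ[R] B} {g : B →ₗ[R] D}
    (_ : SESX R f g) (_ : IsTotallyCReflexive R C D) (_ : gcdimLE R C n A),
    gcdimLE R C n B := by
  induction n with
  | zero =>
    intro A B D f g h hD hA
    exact tr_mid h hA hD
  | succ n ih =>
    intro A B D f g h hD hA
    rw [gd_succ_iff] at hA ⊢
    obtain ⟨X, A', a, x, h1, h2, h3⟩ := hA
    obtain ⟨D', P, d, p, hp, hPf, hPp⟩ := exists_fin_proj D hD.1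
    have hP : IsTotallyCReflexive R C P := tr_proj_s3 hC hPf hPp
    have hD' : IsTotallyCReflexive R C D' := tr_left hp hP hD
    obtain ⟨l, hl⟩ := Module.projective_lifting_property g p h.surj
    have hl' : ∀ t, g (l t) = p t := fun t => congrArg (fun φ : P →ₗ[R] D => φ t) hl
    let w : (X × P) →ₗ[R] B := LinearMap.coprod (f ∘ₗ x) l
    have hw : ∀ s t, w (s, t) = f (x s) + l t := fun s t => by simp [w]
    have hgw : ∀ s t, g (w (s, t)) = p t := fun s t => by
      rw [hw, map_add, h.exact.apply_apply_eq_zero, hl', zero_add]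
    have hws : Function.Surjective w := by
      intro b
      obtain ⟨t, ht⟩ := hp.surj (g b)
      have : g (b - l t) = 0 := by rw [map_sub, hl', ht, sub_self]
      obtain ⟨α, hα⟩ := (h.exact _).1 this
      obtain ⟨s, rfl⟩ := h1.surj α
      refine ⟨(s, t), ?_⟩
      rw [hw, hα, sub_add_cancel]
    let Z : ModuleCat.{u} R := ModuleCat.of R (LinearMap.ker w)
    obtain ⟨q, hq⟩ := exists_lift_inj d hp.inj (LinearMap.snd R X P ∘ₗ (LinearMap.ker w).subtype)
      (fun z => (hp.exact _).1 (by
        obtain ⟨⟨s, t⟩, hz⟩ := z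
        have hz' : w (s, t) = 0 := hz
        show p t = 0
        rw [← hgw s t, hz', map_zero]))
    refine ⟨ModuleCat.of R (X × P), Z, (LinearMap.ker w).subtype, w, ses_ker_s3 w hws,
      tr_mid (A := X) (B := ModuleCat.of R (X × P)) (D := P) (ses_prod_s3 X P) h2 hP, ?_⟩
    refine ih (A := A') (B := Z) (D := D') (g := q)
      (f := LinearMap.codRestrict _ (LinearMap.inl R X P ∘ₗ a) (fun t => ?_)) ⟨?_, ?_, ?_⟩ hD' h3
    · show w (a t, 0) = 0
      rw [hw, h1.exact.apply_apply_eq_zero]; simp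
    · intro s t hst
      exact h1.inj (congrArg (fun z => z.1.1) hst)
    · intro t
      have : g (l (d t)) = 0 := by rw [hl', hp.exact.apply_apply_eq_zero]
      obtain ⟨α, hα⟩ := (h.exact _).1 this
      obtain ⟨s, rfl⟩ := h1.surj α
      refine ⟨⟨(-s, d t), ?_⟩, hp.inj ?_⟩
      · show w (-s, d t) = 0
        rw [hw, map_neg, map_neg, hα, neg_add_cancel]
      · rw [hq]; rfl
    · rintro ⟨⟨s, t⟩, hz⟩
      have hz' : w (s, t) = 0 := hz
      rw [← map_eq_zero_iff d hp.inj, hq]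
      show t = 0 ↔ _
      constructor
      · rintro rfl
        rw [hw, map_zero, add_zero, map_eq_zero_iff f h.inj] at hz'
        obtain ⟨r, rfl⟩ := (h1.exact _).1 hz'
        exact ⟨r, rfl⟩
      · rintro ⟨r, hr⟩
        exact (congrArg (fun z => z.1.2) hr).symm

theorem gd_syz {n : ℕ} {K X M : ModuleCat.{u} R} {f : K →ₗ[R] X} {g : X →ₗ[R] M}
    (h : SESX R f g) (hX : IsTotallyCReflexive R C X) :
    gcdimLE R C (n + 1) M ↔ gcdimLE R C n K := by
  constructor
  · intro hM
    rw [gd_succ_iff] at hM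
    obtain ⟨X', K', f', g', h', hX', hK'⟩ := hM
    let w : (X × X') →ₗ[R] M := LinearMap.coprod g (-g')
    have hw : ∀ s t, w (s, t) = 0 ↔ g s = g' t := fun s t => by
      simp [w, ← sub_eq_add_neg, sub_eq_zero]
    let Z : ModuleCat.{u} R := ModuleCat.of R (LinearMap.ker w)
    have hZ : gcdimLE R C n Z := by
      refine gd_mid hC (A := K') (B := Z) (D := X)
        (f := LinearMap.codRestrict _ (LinearMap.inr R X X' ∘ₗ f') (fun t => ?_))
        (g := LinearMap.fst R X X' ∘ₗ (LinearMap.ker w).subtype) ⟨?_, ?_, ?_⟩ hX hK'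
      · show w (0, f' t) = 0
        rw [hw, h'.exact.apply_apply_eq_zero, map_zero]
      · intro s t hst
        exact h'.inj (congrArg (fun z => z.1.2) hst)
      · intro s
        obtain ⟨t, ht⟩ := h'.surj (g s)
        exact ⟨⟨(s, t), (hw s t).2 ht.symm⟩, rfl⟩
      · rintro ⟨⟨s, t⟩, hz⟩
        have hz' : g s = g' t := (hw s t).1 hz
        show s = 0 ↔ _
        constructor
        · rintro rfl
          rw [map_zero] at hz'
          obtain ⟨r, rfl⟩ := (h'.exact _).1 hz'.symm
          exact ⟨r, rfl⟩
        · rintro ⟨r, hr⟩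
          exact (congrArg (fun z => z.1.1) hr).symm
    refine gd_left (A := K) (B := Z) (D := X')
        (f := LinearMap.codRestrict _ (LinearMap.inl R X X' ∘ₗ f) (fun t => ?_))
        (g := LinearMap.snd R X X' ∘ₗ (LinearMap.ker w).subtype) ⟨?_, ?_, ?_⟩ hX' hZ
    · show w (f t, 0) = 0
      rw [hw, h.exact.apply_apply_eq_zero, map_zero]
    · intro s t hst
      exact h.inj (congrArg (fun z => z.1.1) hst)
    · intro t
      obtain ⟨s, hs⟩ := h.surj (g' t)
      exact ⟨⟨(s, t), (hw s t).2 hs⟩, rfl⟩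
    · rintro ⟨⟨s, t⟩, hz⟩
      have hz' : g s = g' t := (hw s t).1 hz
      show t = 0 ↔ _
      constructor
      · rintro rfl
        rw [map_zero] at hz'
        obtain ⟨r, rfl⟩ := (h.exact _).1 hz'
        exact ⟨r, rfl⟩
      · rintro ⟨r, hr⟩
        exact (congrArg (fun z => z.1.2) hr).symm
  · intro hK
    exact (gd_succ_iff n M).2 ⟨X, K, f, g, h, hX, hK⟩

theorem gd_shift_iff {n : ℕ} {A B D : ModuleCat.{u} R} {f : A →ₗ[R] B} {g : B →ₗ[R] D}
    (h : SESX R f g) (hD : IsTotallyCReflexive R C D) : gcdimLE R C n A ↔ gcdimLE R C n B :=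
  ⟨gd_mid hC h hD, gd_left h hD⟩

end GD


section Quot

/-- an exact pair gives a short exact sequence of cokernels -/
theorem ses_coker {X Y Z : Type u} [AddCommGroup X] [AddCommGroup Y] [AddCommGroup Z]
    [Module R X] [Module R Y] [Module R Z] {a : X →ₗ[R] Y} {b : Y →ₗ[R] Z}
    (h : Function.Exact a b) :
    SESX R ((LinearMap.range a).liftQ b (LinearMap.range_le_ker_iff.2 h.linearMap_comp_eq_zero))
      (LinearMap.range b).mkQ := by
  refine ⟨?_, Submodule.mkQ_surjective _, ?_⟩
  · rw [← LinearMap.ker_eq_bot]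
    apply Submodule.ker_liftQ_eq_bot
    rw [LinearMap.exact_iff.1 h]
  · rw [LinearMap.exact_iff, Submodule.ker_mkQ, Submodule.range_liftQ]

/-- quotient of a short exact sequence by a submodule of the left term -/
theorem ses_quot {X Y Z : Type u} [AddCommGroup X] [AddCommGroup Y] [AddCommGroup Z]
    [Module R X] [Module R Y] [Module R Z] {a : X →ₗ[R] Y} {b : Y →ₗ[R] Z}
    (h : SESX R a b) (N : Submodule R X) :
    SESX R (N.mapQ (N.map a) a (Submodule.le_comap_map a N))
      ((N.map a).liftQ b (by
        rintro _ ⟨x, _, rfl⟩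
        exact (h.exact (a x)).2 ⟨x, rfl⟩)) := by
  refine ⟨?_, ?_, ?_⟩
  · rw [injective_iff_map_eq_zero]
    intro q
    obtain ⟨x, rfl⟩ := Submodule.mkQ_surjective _ q
    intro hx
    simp only [Submodule.mkQ_apply, Submodule.mapQ_apply] at hx
    rw [Submodule.Quotient.mk_eq_zero] at hx
    obtain ⟨y, hy, hxy⟩ := hx
    rw [Submodule.mkQ_apply, Submodule.Quotient.mk_eq_zero, ← h.inj hxy]
    exact hy
  · intro z
    obtain ⟨y, rfl⟩ := h.surj z
    exact ⟨Submodule.Quotient.mk y, by simp⟩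
  · intro q
    obtain ⟨y, rfl⟩ := Submodule.mkQ_surjective _ q
    simp only [Submodule.mkQ_apply, Submodule.liftQ_apply]
    constructor
    · intro hy
      obtain ⟨x, rfl⟩ := (h.exact y).1 hy
      exact ⟨Submodule.Quotient.mk x, by simp⟩
    · rintro ⟨p, hp⟩
      obtain ⟨x, rfl⟩ := Submodule.mkQ_surjective _ p
      simp only [Submodule.mkQ_apply, Submodule.mapQ_apply] at hp
      rw [Submodule.Quotient.eq] at hp
      obtain ⟨x', _, hx'⟩ := hp
      have : y = a (x - x') := by rw [map_sub, hx']; abel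
      rw [this]
      exact (h.exact _).2 ⟨_, rfl⟩

end Quot

section Chain
variable {C : ModuleCat.{u} R} [IsNoetherianRing R] (hC : IsSemidualizing R C)
include hC

/-- the chain of equivalences along a truncated resolution -/
theorem chain_iff (m : ℕ) : ∀ {K' P K : ModuleCat.{u} R} {f : K' →ₗ[R] P} {g : P →ₗ[R] K},
    SESX R f g → Module.Finite R P → Module.Projective R P →
    gcdimLE R C (m + 1) K →
    (∀ i, 0 < i → i < m + 1 → Subsingleton (ExtM R K C i)) →
    ∀ j, (gcdimLE R C j (ModuleCat.of R ((P →ₗ[R] C) ⧸ LinearMap.range (LinearMap.lcomp R C g))) ↔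
      gcdimLE R C (j + m + 1) (ExtM R K C (m + 1))) := by
  induction m with
  | zero =>
    intro K' P K f g h hf hP hK _ j
    have hK' : IsTotallyCReflexive R C K' := (gd_syz hC h (tr_proj_s3 hC hf hP)).1 hK
    obtain ⟨e⟩ := ext_one h hP C
    have hs := ses_coker (dual_left_exact h.surj h.exact C).2
    have h1 := gd_syz (n := j) hC (K := ModuleCat.of R ((P →ₗ[R] C) ⧸ LinearMap.range (LinearMap.lcomp R C g)))
      (X := dl C K') (M := ModuleCat.of R ((K' →ₗ[R] C) ⧸ LinearMap.range (LinearMap.lcomp R C f)))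
      hs (tr_dual hC hK')
    rw [← h1]
    exact (gd_congr_iff (N := ModuleCat.of R ((K' →ₗ[R] C) ⧸ LinearMap.range (LinearMap.lcomp R C f))) e).symm
  | succ m ih =>
    intro K' P K f g h hf hP hK hv j
    have hX := tr_proj_s3 hC hf hP
    have hK' : gcdimLE R C (m + 1) K' := (gd_syz hC h hX).1 hK
    have hK'f : Module.Finite R K' := Module.Finite.of_injective f h.inj
    have hd := ses_dual h (hv 1 one_pos (by omega))
    let e1 : ((P →ₗ[R] C) ⧸ LinearMap.range (LinearMap.lcomp R C g)) ≃ₗ[R] dl C K' :=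
      (Submodule.quotEquivOfEq _ _ (LinearMap.exact_iff.1 hd.exact).symm).trans
        (LinearMap.quotKerEquivOfSurjective _ hd.surj)
    obtain ⟨K'', P', f', g', h', hf', hP'⟩ := exists_fin_proj K' hK'f
    have hv' : ∀ i, 0 < i → i < m + 1 → Subsingleton (ExtM R K' C i) := by
      intro i hi him
      obtain ⟨k, rfl⟩ : ∃ k, i = k + 1 := ⟨i - 1, by omega⟩
      obtain ⟨e⟩ := ext_shift h hP C k
      have := hv (k + 2) (by omega) (by omega)
      exact e.symm.injective.subsingleton
    have hi := ih h' hf' hP' hK' hv' (j + 1)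
    obtain ⟨e⟩ := ext_shift h hP C m
    have hs : SESX R (LinearMap.lcomp R C g') (LinearMap.range (LinearMap.lcomp R C g')).mkQ :=
      ⟨(dual_left_exact h'.surj h'.exact C).1, Submodule.mkQ_surjective _, by
        rw [LinearMap.exact_iff, Submodule.ker_mkQ]⟩
    have h2 := gd_syz (n := j) hC (K := dl C K') (X := dl C P')
      (M := ModuleCat.of R ((P' →ₗ[R] C) ⧸ LinearMap.range (LinearMap.lcomp R C g')))
      hs (tr_dual hC (tr_proj_s3 hC hf' hP'))
    have h3 := gd_congr_iff (C := C) (n := j)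
      (M := ModuleCat.of R ((P →ₗ[R] C) ⧸ LinearMap.range (LinearMap.lcomp R C g))) e1
    rw [h3, ← h2, hi, gd_congr_iff e]
    have : j + 1 + m + 1 = j + (m + 1) + 1 := by omega
    rw [this]

/-- vanishing of Ext for a torsionless module whose transpose is totally reflexive -/
theorem ext_vanish {K' P K : ModuleCat.{u} R} {f : K' →ₗ[R] P} {g : P →ₗ[R] K}
    (h : SESX R f g) (hf : Module.Finite R P) (hP : Module.Projective R P)
    (ht : ∀ x : K, (∀ φ : K →ₗ[R] C, φ x = 0) → x = 0)
    (hT : IsTotallyCReflexive R C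
      (ModuleCat.of R ((P →ₗ[R] C) ⧸ LinearMap.range (LinearMap.lcomp R C g))))
    (i : ℕ) (hi : 0 < i) : Subsingleton (ExtM R K C i) := by
  have hPb : Function.Bijective (bidualityMap R C P) := (tr_proj_s3 hC hf hP).2.1
  let T := ModuleCat.of R ((P →ₗ[R] C) ⧸ LinearMap.range (LinearMap.lcomp R C g))
  have hgf : ∀ k, g (f k) = 0 := fun k => (h.exact _).2 ⟨k, rfl⟩
  let θ : K' →ₗ[R] dl C T :=
    { toFun := fun k => (LinearMap.range (LinearMap.lcomp R C g)).liftQ (bidualityMap R C P (f k)) (by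
        rintro _ ⟨ψ, rfl⟩
        show ψ (g (f k)) = 0
        rw [hgf, map_zero])
      map_add' := fun a b => by
        refine Submodule.linearMap_qext _ (LinearMap.ext fun φ => ?_)
        show φ (f (a + b)) = φ (f a) + φ (f b)
        rw [map_add, map_add]
      map_smul' := fun r a => by
        refine Submodule.linearMap_qext _ (LinearMap.ext fun φ => ?_)
        show φ (f (r • a)) = r • φ (f a)
        rw [map_smul, map_smul] }
  have hθ : ∀ k (φ : P →ₗ[R] C), θ k (Submodule.Quotient.mk φ) = φ (f k) := fun k φ => rfl
  have hb : Function.Bijective θ := by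
    constructor
    · rw [injective_iff_map_eq_zero]
      intro k hk
      apply h.inj
      rw [map_zero]
      apply hPb.1
      rw [map_zero]
      refine LinearMap.ext fun φ => ?_
      show φ (f k) = 0
      rw [← hθ, hk]; rfl
    · intro ξ
      obtain ⟨p, hp⟩ := hPb.2 (LinearMap.comp ξ (LinearMap.range (LinearMap.lcomp R C g)).mkQ)
      have hp' : ∀ φ : P →ₗ[R] C, φ p = ξ (Submodule.Quotient.mk φ) := fun φ =>
        congrArg (fun z : (P →ₗ[R] C) →ₗ[R] C => z φ) hp
      have hgp : g p = 0 := by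
        apply ht
        intro φ
        have h1 := hp' (LinearMap.lcomp R C g φ)
        have h2 : (Submodule.Quotient.mk (LinearMap.lcomp R C g φ) : T) = 0 :=
          (Submodule.Quotient.mk_eq_zero (LinearMap.range (LinearMap.lcomp R C g))).2
            (LinearMap.mem_range_self _ φ)
        exact h1.trans ((congrArg ξ h2).trans (map_zero ξ))
      obtain ⟨k, rfl⟩ := (h.exact p).1 hgp
      refine ⟨k, ?_⟩
      refine Submodule.linearMap_qext _ (LinearMap.ext fun φ => ?_)
      exact hp' φ
  let e : K' ≃ₗ[R] dl C T := LinearEquiv.ofBijective θ hb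
  have hK' : IsTotallyCReflexive R C K' := tr_congr e.symm (tr_dual hC hT)
  obtain ⟨k, rfl⟩ : ∃ k, i = k + 1 := ⟨i - 1, by omega⟩
  match k with
  | 0 =>
    refine ev_one h C (ev_proj P C hP one_pos) fun χ => ?_
    obtain ⟨t, ht'⟩ := hT.2.1.2 (χ ∘ₗ e.symm.toLinearMap)
    obtain ⟨φ, rfl⟩ := Submodule.mkQ_surjective _ t
    refine ⟨φ, LinearMap.ext fun k => ?_⟩
    have h1 : (χ ∘ₗ e.symm.toLinearMap) (e k) = e k (Submodule.Quotient.mk φ) := by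
      rw [← ht']; rfl
    have h2 : (χ ∘ₗ e.symm.toLinearMap) (e k) = χ k := by simp
    rw [← h2, h1]; rfl
  | k + 1 =>
    exact ev_right h C (Nat.succ_pos k) (hK'.2.2.1 _ (Nat.succ_pos k)) (ev_proj P C hP (Nat.succ_pos _))

end Chain

section Num

theorem num_mem {S : Set ℕ} {n : ℕ} (h : sInf ((fun n : ℕ => (n : ℕ∞)) '' S) = (n : ℕ∞)) :
    n ∈ S ∧ ∀ k ∈ S, n ≤ k := by
  constructor
  · have hne : ((fun n : ℕ => (n : ℕ∞)) '' S).Nonempty := by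
      by_contra hn
      rw [Set.not_nonempty_iff_eq_empty] at hn
      rw [hn, sInf_empty] at h
      exact ENat.top_ne_natCast n h
    obtain ⟨k, hk, hk'⟩ := csInf_mem hne
    rw [h] at hk'
    have : k = n := by simpa using hk'
    exact this ▸ hk
  · intro k hk
    have : (n : ℕ∞) ≤ (k : ℕ∞) := h ▸ sInf_le ⟨k, hk, rfl⟩
    exact_mod_cast this

theorem num_shift {S T : Set ℕ} {p : ℕ} (h : ∀ j, j ∈ T ↔ j + p ∈ S) (hS : ∀ k ∈ S, p ≤ k) :
    sInf ((fun n : ℕ => (n : ℕ∞)) '' S) = sInf ((fun n : ℕ => (n : ℕ∞)) '' T) + p := by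
  rcases T.eq_empty_or_nonempty with rfl | hT
  · have : S = ∅ := by
      rw [Set.eq_empty_iff_forall_notMem]
      intro k hk
      have := (h (k - p)).2 (by rwa [Nat.sub_add_cancel (hS k hk)])
      exact this
    simp [this]
  · have hne : ((fun n : ℕ => (n : ℕ∞)) '' T).Nonempty := hT.image _
    obtain ⟨t, ht, ht'⟩ := csInf_mem hne
    apply le_antisymm
    · rw [← ht']
      exact sInf_le ⟨t + p, (h t).1 ht, by simp⟩
    · apply le_sInf
      rintro _ ⟨k, hk, rfl⟩
      have hk2 := (h (k - p)).2 (by rwa [Nat.sub_add_cancel (hS k hk)])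
      have h3 : sInf ((fun n : ℕ => (n : ℕ∞)) '' T) ≤ ((k - p : ℕ) : ℕ∞) := sInf_le ⟨_, hk2, rfl⟩
      calc _ ≤ ((k - p : ℕ) : ℕ∞) + (p : ℕ∞) := by gcongr
        _ = ((k - p + p : ℕ) : ℕ∞) := by push_cast; rfl
        _ = (k : ℕ∞) := by rw [Nat.sub_add_cancel (hS k hk)]

end Num

section Main
variable {C : ModuleCat.{u} R} [IsNoetherianRing R] (hC : IsSemidualizing R C)
include hC

theorem main_aux (M : ModuleCat.{u} R) (n : ℕ) (hred : IsReducedGCPerfect R C M)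
    (hdim : gcdim R C M = n) (T : ModuleCat.{u} R) (hT : IsTransposeC R C M T) :
    gcdim R C M + gcdim R C T = gcdim R C (ExtM R M C n) + 1 := by
  obtain ⟨⟨hn0, hnE⟩, hnmin⟩ := num_mem (show rgrade R C M = n from hred.2.trans hdim)
  have hMn : gcdimLE R C n M := (num_mem hdim).1
  have hv : ∀ i, 0 < i → i < n → Subsingleton (ExtM R M C i) := by
    intro i hi hin
    by_contra hcon
    exact absurd (hnmin i ⟨hi, hcon⟩) (by omega)
  obtain ⟨P1, P0, d, π, ⟨hf1, hf0, ⟨hP0, hπ, _⟩, hr, hP1, _⟩, ⟨eT⟩⟩ := hT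
  have hX0 := tr_proj_s3 hC hf0 hP0
  have hX1 := tr_proj_s3 hC hf1 hP1
  let K1 : ModuleCat.{u} R := ModuleCat.of R (LinearMap.ker π)
  let ι : K1 →ₗ[R] P0 := (LinearMap.ker π).subtype
  have hs0 : SESX R ι π := ses_ker_s3 π hπ
  let db : P1 →ₗ[R] K1 := d.codRestrict (LinearMap.ker π) (fun x => hr ▸ ⟨x, rfl⟩)
  have hdb : Function.Surjective db := by
    rintro ⟨y, hy⟩
    rw [← hr] at hy
    obtain ⟨x, rfl⟩ := hy
    exact ⟨x, rfl⟩
  have hd : ι ∘ₗ db = d := rfl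
  let K2 : ModuleCat.{u} R := ModuleCat.of R (LinearMap.ker db)
  let κ : K2 →ₗ[R] P1 := (LinearMap.ker db).subtype
  have hs1 : SESX R κ db := ses_ker_s3 db hdb
  have hrange : LinearMap.range (LinearMap.lcomp R C d) =
      (LinearMap.range (LinearMap.lcomp R C ι)).map (LinearMap.lcomp R C db) := by
    rw [← LinearMap.range_comp]; rfl
  obtain ⟨p, rfl⟩ : ∃ p, n = p + 1 := ⟨n - 1, by omega⟩
  have hK1 : gcdimLE R C p K1 := (gd_syz hC hs0 hX0).1 hMn
  match p with
  | 0 =>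
    have hK1' : IsTotallyCReflexive R C K1 := hK1
    have hK2 : IsTotallyCReflexive R C K2 := tr_left hs1 hX1 hK1'
    obtain ⟨eE⟩ := ext_one hs0 hP0 C
    have hq := ses_quot (ses_dual hs1 (hK1'.2.2.1 1 one_pos)) (LinearMap.range (LinearMap.lcomp R C ι))
    let eT' := eT.trans (Submodule.quotEquivOfEq _ _ hrange)
    have key : ∀ j, gcdimLE R C j T ↔ gcdimLE R C j (ExtM R M C 1) := by
      intro j
      rw [gd_congr_iff (M := T) (N := ModuleCat.of R ((P1 →ₗ[R] C) ⧸
          (LinearMap.range (LinearMap.lcomp R C ι)).map (LinearMap.lcomp R C db))) eT',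
        gd_congr_iff (M := ExtM R M C 1) (N := ModuleCat.of R ((K1 →ₗ[R] C) ⧸
          (LinearMap.range (LinearMap.lcomp R C ι)))) eE]
      exact (gd_shift_iff hC (A := ModuleCat.of R ((K1 →ₗ[R] C) ⧸
          (LinearMap.range (LinearMap.lcomp R C ι))))
          (B := ModuleCat.of R ((P1 →ₗ[R] C) ⧸
          (LinearMap.range (LinearMap.lcomp R C ι)).map (LinearMap.lcomp R C db)))
          (D := dl C K2) hq (tr_dual hC hK2)).symm
    have hE : gcdim R C T = gcdim R C (ExtM R M C 1) := by
      unfold gcdim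
      simp only [key]
    rw [hdim, hE, add_comm]
    rfl
  | m + 1 =>
    have h1 : LinearMap.range (LinearMap.lcomp R C ι) = ⊤ := by
      rw [LinearMap.range_eq_top]
      intro φ
      exact ev_extend hs0 C (hv 1 one_pos (by omega)) φ
    have hrange' : LinearMap.range (LinearMap.lcomp R C d) = LinearMap.range (LinearMap.lcomp R C db) := by
      rw [hrange, h1, Submodule.map_top]
    let T' : ModuleCat.{u} R :=
      ModuleCat.of R ((P1 →ₗ[R] C) ⧸ LinearMap.range (LinearMap.lcomp R C db))
    let eT' : T ≃ₗ[R] T' := eT.trans (Submodule.quotEquivOfEq _ _ hrange')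
    have hvK : ∀ i, 0 < i → i < m + 1 → Subsingleton (ExtM R K1 C i) := by
      intro i hi him
      obtain ⟨k, rfl⟩ : ∃ k, i = k + 1 := ⟨i - 1, by omega⟩
      obtain ⟨e⟩ := ext_shift hs0 hP0 C k
      have := hv (k + 2) (by omega) (by omega)
      exact e.symm.injective.subsingleton
    obtain ⟨eS⟩ := ext_shift hs0 hP0 C m
    have key : ∀ j, gcdimLE R C j T ↔ gcdimLE R C (j + (m + 1)) (ExtM R M C (m + 2)) := by
      intro j
      rw [gd_congr_iff eT', gd_congr_iff eS]
      exact chain_iff hC m hs1 hf1 hP1 hK1 hvK j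
    have hnot : ¬ gcdimLE R C 0 T := by
      intro h0
      have h0' : IsTotallyCReflexive R C T' := tr_congr eT' h0
      have ht : ∀ x : K1, (∀ φ : K1 →ₗ[R] C, φ x = 0) → x = 0 := by
        intro x hx
        apply hs0.inj
        rw [map_zero]
        apply hX0.2.1.1
        rw [map_zero]
        exact LinearMap.ext fun φ => hx (φ ∘ₗ ι)
      have := ext_vanish hC hs1 hf1 hP1 ht h0' (m + 1) (Nat.succ_pos m)
      exact hnE eS.injective.subsingleton
    have hE : gcdim R C (ExtM R M C (m + 2)) = gcdim R C T + ((m + 1 : ℕ) : ℕ∞) := by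
      refine num_shift key fun k hk => ?_
      by_contra hlt
      exact hnot ((key 0).2 (gd_mono (by omega) hk))
    rw [hdim]
    show _ = gcdim R C (ExtM R M C (m + 2)) + 1
    rw [hE, Nat.cast_add (m + 1) 1, Nat.cast_one, add_comm, add_assoc (gcdim R C T)]

end Main

end Helpers

/-- if `M` is reduced `G_C`-perfect of `G_C`-dimension `n`, then
`G_C-dim(M) + G_C-dim(Tr_C(M)) = G_C-dim(Ext_R^n(M,C)) + 1` in `ℕ∞`. -/
theorem statement3 [IsNoetherianRing R] (hsp : IsSemiperfectRing R)
    (C : ModuleCat.{u} R) (hC : IsSemidualizing R C)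
    (M : ModuleCat.{u} R) (hMfin : Module.Finite R ↥M)
    (n : ℕ) (hred : IsReducedGCPerfect R C M) (hdim : gcdim R C M = n) :
    ∀ T : ModuleCat.{u} R, IsTransposeC R C M T →
      gcdim R C M + gcdim R C T = gcdim R C (ExtM R M C n) + 1 := by
  intro T hT
  exact main_aux hC M n hred hdim T hT

end
end
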